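/- Let A be a ring such that the finitely presented right A-modules form an abelian category. Sending an indecomposable endofinite A-module M to χ_M induces a bijection between the isomorphism classes of indecomposable endofinite A-modules and the irreducible subadditive functions on the finitely presented A-modules: for M indecomposable endofinite, χ_M is irreducible; every irreducible subadditive function equals χ_M for some indecomposable endofinite M; and χ_M = χ_N for indecomposable endofinite M, N implies M ≅ N. -/

import Mathlib

/-- The composition length of a module (the length of a composition series,
zero if none exists). -/
noncomputable def compLength (R : Type) [Ring R] (M : Type) [AddCommGroup M] [Module R M] : ℕ := by
  classical
  exact if h : ∃ s : CompositionSeries (Submodule R M), s.head = ⊥ ∧ s.last = ⊤ then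
    h.choose.length else 0

/-- A module `M` is endofinite if it has finite composition length over its
endomorphism ring, which acts on `M` by application. -/
def IsEndofinite (A : Type) [Ring A] (M : Type) [AddCommGroup M] [Module A M] : Prop :=
  IsFiniteLength (Module.End A M) M

/-- The subadditive function `χ_M` associated to a module `M`:
`χ_M(X) = ℓ_{End_A(M)} Hom_A(X, M)`, where `End_A(M)` acts by postcomposition. -/
noncomputable def chiMod (A : Type) [Ring A] (M : Type) [AddCommGroup M] [Module A M]
    (X : Type) [AddCommGroup X] [Module A X] : ℕ :=
  compLength (Module.End A M) (X →ₗ[A] M)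

/-- A subadditive function on the finitely presented `A`-modules: it depends only on
the isomorphism class, is additive on direct sums, and satisfies
`χ(X) + χ(Z) ≥ χ(Y)` for every exact sequence `X → Y → Z → 0`. -/
def IsSubadditive (A : Type) [Ring A]
    (χ : (X : Type) → [AddCommGroup X] → [Module A X] → ℕ) : Prop :=
  (∀ (X Y : Type) [AddCommGroup X] [Module A X] [AddCommGroup Y] [Module A Y],
      Module.FinitePresentation A X → Module.FinitePresentation A Y →
      (X ≃ₗ[A] Y) → χ X = χ Y) ∧
  (∀ (X Y : Type) [AddCommGroup X] [Module A X] [AddCommGroup Y] [Module A Y],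
      Module.FinitePresentation A X → Module.FinitePresentation A Y →
      χ (X × Y) = χ X + χ Y) ∧
  (∀ (X Y Z : Type) [AddCommGroup X] [Module A X] [AddCommGroup Y] [Module A Y]
      [AddCommGroup Z] [Module A Z],
      Module.FinitePresentation A X → Module.FinitePresentation A Y →
      Module.FinitePresentation A Z →
      ∀ (f : X →ₗ[A] Y) (g : Y →ₗ[A] Z),
      Function.Exact f g → Function.Surjective g → χ Y ≤ χ X + χ Z)

/-- Membership in the additive locus `Adloc(χ)`: `Z` is finitely presented and
`χ(X) - χ(Y) + χ(Z) = 0` for every short exact sequence `0 → X → Y → Z → 0` of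
finitely presented modules. -/
def MemAdloc (A : Type) [Ring A]
    (χ : (X : Type) → [AddCommGroup X] → [Module A X] → ℕ)
    (Z : Type) [AddCommGroup Z] [Module A Z] : Prop :=
  Module.FinitePresentation A Z ∧
  ∀ (X Y : Type) [AddCommGroup X] [Module A X] [AddCommGroup Y] [Module A Y],
    Module.FinitePresentation A X → Module.FinitePresentation A Y →
    ∀ (f : X →ₗ[A] Y) (g : Y →ₗ[A] Z),
    Function.Injective f → Function.Exact f g → Function.Surjective g →
    χ X + χ Z = χ Y

/-- The hypothesis that the finitely presented `A`-modules form an abelian category: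
kernels of maps between finitely presented modules are finitely presented. -/
def FpAbelian (A : Type) [Ring A] : Prop :=
  ∀ (X Y : Type) [AddCommGroup X] [Module A X] [AddCommGroup Y] [Module A Y],
    Module.FinitePresentation A X → Module.FinitePresentation A Y →
    ∀ f : X →ₗ[A] Y, Module.FinitePresentation A (LinearMap.ker f)

/-- Two functions agree on all finitely presented `A`-modules. -/
def FpEq (A : Type) [Ring A]
    (χ χ' : (X : Type) → [AddCommGroup X] → [Module A X] → ℕ) : Prop :=
  ∀ (X : Type) [AddCommGroup X] [Module A X], Module.FinitePresentation A X → χ X = χ' X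

/-- A function is non-zero on the finitely presented `A`-modules. -/
def FpNonzero (A : Type) [Ring A]
    (χ : (X : Type) → [AddCommGroup X] → [Module A X] → ℕ) : Prop :=
  ∃ (X : Type) (_ : AddCommGroup X) (_ : Module A X),
    Module.FinitePresentation A X ∧ χ X ≠ 0

/-- A subadditive function is irreducible if it is non-zero and is not the sum of two
non-zero subadditive functions. -/
def IsIrreducibleSubadditive (A : Type) [Ring A]
    (χ : (X : Type) → [AddCommGroup X] → [Module A X] → ℕ) : Prop :=
  IsSubadditive A χ ∧ FpNonzero A χ ∧
  ¬ ∃ χ₁ χ₂ : (X : Type) → [AddCommGroup X] → [Module A X] → ℕ,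
      IsSubadditive A χ₁ ∧ IsSubadditive A χ₂ ∧ FpNonzero A χ₁ ∧ FpNonzero A χ₂ ∧
      FpEq A χ (fun X _ _ => χ₁ X + χ₂ X)

/-- An `A`-module is indecomposable if it is non-trivial and in any direct sum
decomposition one summand is trivial. -/
def IsIndecomposableModule (A : Type) [Ring A] (M : Type) [AddCommGroup M] [Module A M] :
    Prop :=
  Nontrivial M ∧
  ∀ (N₁ N₂ : Type) (_ : AddCommGroup N₁) (_ : Module A N₁) (_ : AddCommGroup N₂)
    (_ : Module A N₂), (M ≃ₗ[A] N₁ × N₂) → (Subsingleton N₁ ∨ Subsingleton N₂)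

/-!
Call a map `f : X → Y` of finitely presented modules a `χ`-monomorphism if
`χ(X) - χ(Y) + χ(coker f) = 0`. These maps are stable under pushouts, so a small object argument
produces a non-zero module `M` which is injective along all of them. Let the rank of the positive
primitive formula given by `f : X → Y` be `χ(Y) - χ(coker f) ≤ χ(X)`. Injectivity of `M` makes the
rank grow strictly along inclusions of definable subgroups of `Hom(X, M)`, and `M` has the
descending chain condition on such subgroups, which lets one extend partial maps respecting positive
primitive types to `M`. Hence every cyclic `End(M)`-submodule of `Hom(X, M)` is definable, and the
length of `Hom(X, M)` is at most `χ(X)`. The same count shows that `χ - χ_M` is subadditive, so an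
irreducible `χ` equals `χ_M`, where `M` may be taken indecomposable.

If `χ = χ_M` with `M` indecomposable, then the `χ`-injective modules are those which respect all
inclusions between definable subgroups of `M`. An indecomposable one shares with `M` the positive
primitive type of some non-zero element; extending partial maps both ways gives endomorphisms fixing
a non-zero element, which are automorphisms by a Fitting argument. This gives injectivity of the
correspondence, and irreducibility of `χ_M`: if `χ_M = χ₁ + χ₂`, then `M` is both `χ₁`- and
`χ₂`-injective, so `2 χ_M ≤ χ_M`.
-/

section LinearPushout

variable {A X Y X' M : Type*} [Ring A] [AddCommGroup X] [Module A X] [AddCommGroup Y] [Module A Y]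
  [AddCommGroup X'] [Module A X'] [AddCommGroup M] [Module A M]

instance finitePresentation_quotient_range [Module.Finite A X] [Module.FinitePresentation A Y]
    (f : X →ₗ[A] Y) : Module.FinitePresentation A (Y ⧸ LinearMap.range f) :=
  Module.finitePresentation_of_surjective _ (Submodule.mkQ_surjective _)
    (by simpa only [Submodule.ker_mkQ] using Submodule.fg_range f)

theorem exists_comp_eq_of_exact {f : X →ₗ[A] Y} {g : Y →ₗ[A] X'} (hfg : Function.Exact f g)
    (hg : Function.Surjective g) {u : Y →ₗ[A] M} (hu : u ∘ₗ f = 0) :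
    ∃ v : X' →ₗ[A] M, v ∘ₗ g = u := by
  refine ⟨(LinearMap.range f).liftQ u (LinearMap.range_le_ker_iff.2 hu) ∘ₗ
    (hfg.linearEquivOfSurjective hg).symm.toLinearMap, ?_⟩
  ext y
  simp

/-- The pushout of the linear maps `g : X → X'` and `f : X → Y`, realised as the cokernel of
`x ↦ (g x, -f x)`. -/
abbrev LinearPushout (g : X →ₗ[A] X') (f : X →ₗ[A] Y) : Type _ :=
  (X' × Y) ⧸ LinearMap.range (g.prod (-f))

namespace LinearPushout

variable (g : X →ₗ[A] X') (f : X →ₗ[A] Y)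

/-- The canonical map from the target of the first leg to the pushout. -/
def inl : X' →ₗ[A] LinearPushout g f := Submodule.mkQ _ ∘ₗ LinearMap.inl A X' Y

/-- The canonical map from the target of the second leg to the pushout. -/
def inr : Y →ₗ[A] LinearPushout g f := Submodule.mkQ _ ∘ₗ LinearMap.inr A X' Y

theorem inl_add_inr (a : X') (b : Y) :
    inl g f a + inr g f b = Submodule.Quotient.mk (a, b) := by
  simp only [inl, inr, LinearMap.comp_apply, LinearMap.inl_apply, LinearMap.inr_apply,
    Submodule.mkQ_apply, ← Submodule.Quotient.mk_add, Prod.mk_add_mk, add_zero, zero_add]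

theorem exists_inl_add_inr (p : LinearPushout g f) : ∃ a b, inl g f a + inr g f b = p := by
  obtain ⟨⟨a, b⟩, rfl⟩ := Submodule.mkQ_surjective _ p
  exact ⟨a, b, inl_add_inr g f a b⟩

theorem inl_add_inr_eq_zero_iff {a : X'} {b : Y} :
    inl g f a + inr g f b = 0 ↔ ∃ x, g x = a ∧ -f x = b := by
  simp [inl_add_inr, Submodule.Quotient.mk_eq_zero]

theorem inl_comp : inl g f ∘ₗ g = inr g f ∘ₗ f := by
  ext x
  rw [← sub_eq_zero, LinearMap.comp_apply, LinearMap.comp_apply, sub_eq_add_neg, ← map_neg,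
    inl_add_inr_eq_zero_iff]
  exact ⟨x, rfl, rfl⟩

variable {g f}

/-- The map out of the pushout induced by a commutative square. -/
def desc (u : X' →ₗ[A] M) (v : Y →ₗ[A] M) (h : u ∘ₗ g = v ∘ₗ f) : LinearPushout g f →ₗ[A] M :=
  Submodule.liftQ _ (u.coprod v) <| by
    rintro _ ⟨x, rfl⟩
    simpa [sub_eq_zero, ← sub_eq_add_neg] using LinearMap.congr_fun h x

@[simp] theorem desc_inl (u : X' →ₗ[A] M) (v : Y →ₗ[A] M) (h : u ∘ₗ g = v ∘ₗ f) (a : X') :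
    desc u v h (inl g f a) = u a := by
  simp [desc, inl]

@[simp] theorem desc_inr (u : X' →ₗ[A] M) (v : Y →ₗ[A] M) (h : u ∘ₗ g = v ∘ₗ f) (b : Y) :
    desc u v h (inr g f b) = v b := by
  simp [desc, inr]

@[simp] theorem desc_comp_inl (u : X' →ₗ[A] M) (v : Y →ₗ[A] M) (h : u ∘ₗ g = v ∘ₗ f) :
    desc u v h ∘ₗ inl g f = u :=
  LinearMap.ext (desc_inl u v h)

@[simp] theorem desc_comp_inr (u : X' →ₗ[A] M) (v : Y →ₗ[A] M) (h : u ∘ₗ g = v ∘ₗ f) :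
    desc u v h ∘ₗ inr g f = v :=
  LinearMap.ext (desc_inr u v h)

theorem exists_comp_inl_eq_iff {u : X' →ₗ[A] M} :
    (∃ w : LinearPushout g f →ₗ[A] M, w ∘ₗ inl g f = u) ↔ ∃ v : Y →ₗ[A] M, v ∘ₗ f = u ∘ₗ g := by
  constructor
  · rintro ⟨w, rfl⟩
    exact ⟨w ∘ₗ inr g f, by rw [LinearMap.comp_assoc, LinearMap.comp_assoc, inl_comp]⟩
  · rintro ⟨v, hv⟩
    exact ⟨desc u v hv.symm, desc_comp_inl u v _⟩

variable (g f)

/-- The map from the pushout to the cokernel of `f` which kills `X'`. -/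
def toCoker : LinearPushout g f →ₗ[A] Y ⧸ LinearMap.range f :=
  desc 0 (LinearMap.range f).mkQ (by rw [LinearMap.zero_comp, LinearMap.range_mkQ_comp])

theorem toCoker_surjective : Function.Surjective (toCoker g f) := fun z ↦ by
  obtain ⟨y, rfl⟩ := Submodule.mkQ_surjective _ z
  exact ⟨inr g f y, desc_inr ..⟩

theorem exact_inl_toCoker : Function.Exact (inl g f) (toCoker g f) := fun p ↦ by
  constructor
  · obtain ⟨a, b, rfl⟩ := exists_inl_add_inr g f p
    intro h
    obtain ⟨x, rfl⟩ : ∃ x, f x = b := by simpa [toCoker] using h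
    exact ⟨a + g x, by rw [map_add, ← LinearMap.comp_apply (inl g f) g, inl_comp,
      LinearMap.comp_apply]⟩
  · rintro ⟨a, rfl⟩
    exact desc_inl ..

end LinearPushout

end LinearPushout

/-- The type of functions assigning a natural number to every `A`-module. -/
abbrev ModuleFunction (A : Type) [Ring A] : Type 1 :=
  (X : Type) → [AddCommGroup X] → [Module A X] → ℕ

/-- A `χ`-monomorphism: a map `f : X → Y` which `χ` treats as a monomorphism, in the sense that
`χ(X) - χ(Y) + χ(coker f) = 0`. -/
def IsChiMono {A : Type} [Ring A] (χ : ModuleFunction A) {X Y : Type} [AddCommGroup X]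
    [Module A X] [AddCommGroup Y] [Module A Y] (f : X →ₗ[A] Y) : Prop :=
  χ X + χ (Y ⧸ LinearMap.range f) = χ Y

section ChiMono

variable {A : Type} [Ring A] {χ : ModuleFunction A}
  {X Y Z W : Type} [AddCommGroup X] [Module A X] [AddCommGroup Y] [Module A Y]
  [AddCommGroup Z] [Module A Z] [AddCommGroup W] [Module A W]
  [Module.FinitePresentation A X] [Module.FinitePresentation A Y] [Module.FinitePresentation A Z]
  [Module.FinitePresentation A W]

namespace IsSubadditive

theorem map_equiv (hχ : IsSubadditive A χ) (e : X ≃ₗ[A] Y) : χ X = χ Y :=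
  hχ.1 X Y ‹_› ‹_› e

theorem map_prod (hχ : IsSubadditive A χ) : χ (X × Y) = χ X + χ Y :=
  hχ.2.1 X Y ‹_› ‹_›

theorem le_add_of_exact (hχ : IsSubadditive A χ) {f : X →ₗ[A] Y} {g : Y →ₗ[A] Z}
    (hfg : Function.Exact f g) (hg : Function.Surjective g) : χ Y ≤ χ X + χ Z :=
  hχ.2.2 X Y Z ‹_› ‹_› ‹_› f g hfg hg

theorem map_of_subsingleton (hχ : IsSubadditive A χ) [Subsingleton X] : χ X = 0 := by
  have h := hχ.map_equiv (LinearEquiv.ofSubsingleton X (X × X))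
  rw [hχ.map_prod] at h
  omega

theorem le_of_surjective (hχ : IsSubadditive A χ) {g : Y →ₗ[A] Z} (hg : Function.Surjective g) :
    χ Z ≤ χ Y := by
  have h := hχ.le_add_of_exact (g := (0 : Z →ₗ[A] PUnit))
    (fun z ↦ ⟨fun _ ↦ hg z, fun _ ↦ rfl⟩) (fun _ ↦ ⟨0, rfl⟩)
  rwa [hχ.map_of_subsingleton (X := PUnit), add_zero] at h

theorem map_coker_of_exact (hχ : IsSubadditive A χ) {f : X →ₗ[A] Y} {g : Y →ₗ[A] Z}
    (hfg : Function.Exact f g) (hg : Function.Surjective g) :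
    χ (Y ⧸ LinearMap.range f) = χ Z :=
  hχ.map_equiv (hfg.linearEquivOfSurjective hg)

theorem le_add_coker (hχ : IsSubadditive A χ) (f : X →ₗ[A] Y) :
    χ Y ≤ χ X + χ (Y ⧸ LinearMap.range f) :=
  hχ.le_add_of_exact (LinearMap.exact_map_mkQ_range f) (Submodule.mkQ_surjective _)

theorem coker_le (hχ : IsSubadditive A χ) (f : X →ₗ[A] Y) : χ (Y ⧸ LinearMap.range f) ≤ χ Y :=
  hχ.le_of_surjective (Submodule.mkQ_surjective _)

theorem coker_comp_le (hχ : IsSubadditive A χ) (f : X →ₗ[A] Y) (g : Y →ₗ[A] Z) :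
    χ (Z ⧸ LinearMap.range (g ∘ₗ f)) ≤
      χ (Y ⧸ LinearMap.range f) + χ (Z ⧸ LinearMap.range g) := by
  have hle : LinearMap.range f ≤ (LinearMap.range (g ∘ₗ f)).comap g := by
    rw [← Submodule.map_le_iff_le_comap, LinearMap.range_comp]
  refine hχ.le_add_of_exact (f := Submodule.mapQ _ _ g hle)
    (g := Submodule.factor (LinearMap.range_comp_le_range f g)) ?_ (Submodule.factor_surjective _)
  rw [LinearMap.exact_iff, Submodule.factor, Submodule.ker_mapQ, Submodule.range_mapQ,
    Submodule.comap_id]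

theorem map_pi (hχ : IsSubadditive A χ) (ι : Type) [Fintype ι] (V : ι → Type)
    [∀ i, AddCommGroup (V i)] [∀ i, Module A (V i)] [∀ i, Module.FinitePresentation A (V i)] :
    χ (∀ i, V i) = ∑ i, χ (V i) := by
  revert V
  refine Fintype.induction_empty_option (P := fun ι _ ↦ ∀ (V : ι → Type) [∀ i, AddCommGroup (V i)]
    [∀ i, Module A (V i)] [∀ i, Module.FinitePresentation A (V i)],
    χ (∀ i, V i) = ∑ i, χ (V i)) ?_ ?_ ?_ ι
  · intro α β _ e ih V _ _ _
    let _ := Fintype.ofEquiv β e.symm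
    rw [← e.sum_comp (fun i ↦ χ (V i)), ← ih fun i ↦ V (e i)]
    exact (hχ.map_equiv (LinearEquiv.piCongrLeft A V e)).symm
  · intro V _ _ _
    exact hχ.map_of_subsingleton
  · intro α _ ih V _ _ _
    rw [hχ.map_equiv (LinearEquiv.piOptionEquivProd A), hχ.map_prod, ih, Fintype.sum_option]

end IsSubadditive

theorem isChiMono_iff_of_exact (hχ : IsSubadditive A χ) {f : X →ₗ[A] Y} {g : Y →ₗ[A] Z}
    (hfg : Function.Exact f g) (hg : Function.Surjective g) :
    IsChiMono χ f ↔ χ X + χ Z = χ Y := by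
  rw [IsChiMono, hχ.map_coker_of_exact hfg hg]

theorem isChiMono_zero_iff (hχ : IsSubadditive A χ) :
    IsChiMono χ (0 : X →ₗ[A] Y) ↔ χ X = 0 := by
  rw [isChiMono_iff_of_exact hχ (g := LinearMap.id) (fun y ↦ by simp [eq_comm])
    Function.surjective_id, Nat.add_eq_right]

namespace IsChiMono

theorem of_equiv (hχ : IsSubadditive A χ) (e : X ≃ₗ[A] Y) : IsChiMono χ e.toLinearMap := by
  rw [isChiMono_iff_of_exact hχ (g := (0 : Y →ₗ[A] PUnit)) (fun y ↦ by simp)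
    (fun _ ↦ ⟨0, rfl⟩), hχ.map_of_subsingleton (X := PUnit), add_zero, hχ.map_equiv e]

protected theorem id (hχ : IsSubadditive A χ) : IsChiMono χ (LinearMap.id : X →ₗ[A] X) :=
  .of_equiv hχ (.refl A X)

theorem comp (hχ : IsSubadditive A χ) {g : Y →ₗ[A] Z} {f : X →ₗ[A] Y} (hg : IsChiMono χ g)
    (hf : IsChiMono χ f) : IsChiMono χ (g ∘ₗ f) := by
  have h₁ := hχ.le_add_coker (g ∘ₗ f)
  have h₂ := hχ.coker_comp_le f g
  unfold IsChiMono at *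
  omega

theorem pushoutInl (hχ : IsSubadditive A χ) (g : X →ₗ[A] W) {f : X →ₗ[A] Y}
    (hf : IsChiMono χ f) : IsChiMono χ (LinearPushout.inl g f) := by
  rw [isChiMono_iff_of_exact hχ (LinearPushout.exact_inl_toCoker g f)
    (LinearPushout.toCoker_surjective g f)]
  have h₁ := hχ.le_add_of_exact (LinearPushout.exact_inl_toCoker g f)
    (LinearPushout.toCoker_surjective g f)
  have h₂ : χ (W × Y) ≤ χ X + χ (LinearPushout g f) := hχ.le_add_coker (g.prod (-f))
  rw [hχ.map_prod] at h₂
  unfold IsChiMono at hf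
  omega

theorem prodMap (hχ : IsSubadditive A χ) {f : X →ₗ[A] Y} {g : Z →ₗ[A] W} (hf : IsChiMono χ f)
    (hg : IsChiMono χ g) : IsChiMono χ (f.prodMap g) := by
  rw [isChiMono_iff_of_exact hχ
    (g := (LinearMap.range f).mkQ.prodMap (LinearMap.range g).mkQ)
    (fun p ↦ by simp [Prod.ext_iff])
    ((Submodule.mkQ_surjective _).prodMap (Submodule.mkQ_surjective _)),
    hχ.map_prod, hχ.map_prod, hχ.map_prod]
  unfold IsChiMono at *
  omega

theorem piMap (hχ : IsSubadditive A χ) {ι : Type} [Finite ι] {U V : ι → Type}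
    [∀ i, AddCommGroup (V i)] [∀ i, Module A (V i)] [∀ i, Module.FinitePresentation A (V i)]
    [∀ i, AddCommGroup (U i)] [∀ i, Module A (U i)] [∀ i, Module.FinitePresentation A (U i)]
    {f : ∀ i, U i →ₗ[A] V i} (hf : ∀ i, IsChiMono χ (f i)) :
    IsChiMono χ (LinearMap.piMap f) := by
  have := Fintype.ofFinite ι
  rw [isChiMono_iff_of_exact hχ
    (g := LinearMap.piMap fun i ↦ (LinearMap.range (f i)).mkQ)
    (fun v ↦ by simp [funext_iff, Classical.skolem])
    (Function.Surjective.piMap fun i ↦ Submodule.mkQ_surjective _),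
    hχ.map_pi, hχ.map_pi, hχ.map_pi, ← Finset.sum_add_distrib]
  exact Finset.sum_congr rfl fun i _ ↦ hf i

end IsChiMono

end ChiMono

section DirectLimit

variable {A ι X : Type*} [Ring A] [AddCommGroup X] [Module A X] [Preorder ι]
  [IsDirectedOrder ι] [DecidableEq ι] {G : ι → Type*} [∀ i, AddCommGroup (G i)]
  [∀ i, Module A (G i)] {f : ∀ i j, i ≤ j → G i →ₗ[A] G j}

theorem exists_transition_comp_eq_zero [DirectedSystem G (f · · ·)] [Module.Finite A X] {i : ι}
    {x : X →ₗ[A] G i} (hx : Module.DirectLimit.of A ι G f i ∘ₗ x = 0) :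
    ∃ j, ∃ hij : i ≤ j, f i j hij ∘ₗ x = 0 := by
  have : Nonempty ι := ⟨i⟩
  obtain ⟨S, hS⟩ := Module.Finite.fg_top (R := A) (M := X)
  have hzero (ξ : S) : ∃ j, ∃ hij : i ≤ j, f i j hij (x ξ) = 0 :=
    Module.DirectLimit.of.zero_exact (LinearMap.congr_fun hx ξ.1)
  choose j hij hj using hzero
  obtain ⟨k, hk⟩ := Finite.exists_le (fun ξ : Option S ↦ ξ.elim i j)
  refine ⟨k, hk none, LinearMap.ext_on hS fun ξ hξ ↦ ?_⟩
  have hjk : j ⟨ξ, hξ⟩ ≤ k := hk (some ⟨ξ, hξ⟩)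
  rw [LinearMap.comp_apply, ← DirectedSystem.map_map' (f := f) (hij ⟨ξ, hξ⟩) hjk, hj, map_zero,
    LinearMap.zero_apply]

theorem exists_directLimit_of_comp_eq_of_free [Nonempty ι] {n : ℕ}
    (x : (Fin n → A) →ₗ[A] Module.DirectLimit G f) :
    ∃ i, ∃ y : (Fin n → A) →ₗ[A] G i, Module.DirectLimit.of A ι G f i ∘ₗ y = x := by
  choose i z hz using fun k ↦ Module.DirectLimit.exists_of (x (Pi.single k 1))
  obtain ⟨j, hj⟩ := Finite.exists_le i
  refine ⟨j, (Pi.basisFun A (Fin n)).constr ℕ fun k ↦ f (i k) j (hj k) (z k),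
    (Pi.basisFun A (Fin n)).ext fun k ↦ ?_⟩
  rw [LinearMap.comp_apply, Module.Basis.constr_basis, Module.DirectLimit.of_f, hz,
    Pi.basisFun_apply]

theorem exists_directLimit_of_comp_eq [Nonempty ι] [DirectedSystem G (f · · ·)]
    [Module.FinitePresentation A X] (x : X →ₗ[A] Module.DirectLimit G f) :
    ∃ i, ∃ y : X →ₗ[A] G i, Module.DirectLimit.of A ι G f i ∘ₗ y = x := by
  obtain ⟨n, m, p, r, hp, hrp⟩ := Module.FinitePresentation.exists_fin' A X
  obtain ⟨i, y, hy⟩ := exists_directLimit_of_comp_eq_of_free (x ∘ₗ p)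
  have hyr : Module.DirectLimit.of A ι G f i ∘ₗ (y ∘ₗ r) = 0 := by
    rw [← LinearMap.comp_assoc, hy, LinearMap.comp_assoc, hrp.linearMap_comp_eq_zero,
      LinearMap.comp_zero]
  obtain ⟨j, hij, hj⟩ := exists_transition_comp_eq_zero hyr
  obtain ⟨y', hy'⟩ := exists_comp_eq_of_exact hrp hp (u := f i j hij ∘ₗ y) hj
  refine ⟨j, y', (LinearMap.cancel_right hp).1 ?_⟩
  rw [LinearMap.comp_assoc, hy', ← hy]
  exact LinearMap.ext fun ξ ↦ Module.DirectLimit.of_f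

end DirectLimit

section FreePushout

variable {A X Z : Type*} [Ring A] [AddCommGroup X] [Module A X] [AddCommGroup Z] [Module A Z]

theorem exists_equiv_pushout_of_free [Module.Finite A X] [Module.FinitePresentation A Z]
    (k : X →ₗ[A] Z) :
    ∃ (m n : ℕ) (l : (Fin m → A) →ₗ[A] X) (g : (Fin m → A) →ₗ[A] (Fin n → A))
      (e : LinearPushout l g ≃ₗ[A] Z), e.toLinearMap ∘ₗ LinearPushout.inl l g = k := by
  obtain ⟨n, d, hd⟩ := Module.Finite.exists_fin' A Z
  have hkd : Function.Surjective (k.coprod d) := fun z ↦ by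
    obtain ⟨y, rfl⟩ := hd z
    exact ⟨(0, y), by simp⟩
  obtain ⟨m, w, hw⟩ := (Submodule.fg_iff_exists_fin_linearMap _ _).1
    (Module.FinitePresentation.fg_ker (k.coprod d) hkd)
  have hlg : (LinearMap.fst A _ _ ∘ₗ w).prod (-(-(LinearMap.snd A _ _ ∘ₗ w))) = w := by
    rw [neg_neg]; rfl
  have hexact : Function.Exact
      ((LinearMap.fst A _ _ ∘ₗ w).prod (-(-(LinearMap.snd A _ _ ∘ₗ w)))) (k.coprod d) := by
    rw [LinearMap.exact_iff, hlg, hw]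
  refine ⟨m, n, LinearMap.fst A _ _ ∘ₗ w, -(LinearMap.snd A _ _ ∘ₗ w),
    hexact.linearEquivOfSurjective hkd, ?_⟩
  ext x
  change k.coprod d (x, 0) = k x
  simp

end FreePushout

section IndChiMono

variable {A : Type} [Ring A]

/-- The map `x` out of the source of `k` factors as `x' ∘ a` through the source of a
`χ`-monomorphism `s` between finitely presented modules such that `s ∘ a` factors through `k`. -/
def FactorsViaChiMono (χ : ModuleFunction A) {X Z U : Type} [AddCommGroup X] [Module A X]
    [AddCommGroup Z] [Module A Z] [AddCommGroup U] [Module A U] (k : X →ₗ[A] Z) (x : X →ₗ[A] U) :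
    Prop :=
  ∃ (X' Y' : Type) (_ : AddCommGroup X') (_ : Module A X') (_ : AddCommGroup Y')
    (_ : Module A Y') (_ : Module.FinitePresentation A X') (_ : Module.FinitePresentation A Y')
    (a : X →ₗ[A] X') (x' : X' →ₗ[A] U) (s : X' →ₗ[A] Y') (h : Z →ₗ[A] Y'),
    IsChiMono χ s ∧ x' ∘ₗ a = x ∧ h ∘ₗ k = s ∘ₗ a

/-- The analogue of a `χ`-monomorphism for a map `j : U → V` of arbitrary modules: in every
commutative square from a map `k` of finitely presented modules to `j`, the map to `U` factors
through a `χ`-monomorphism as in `FactorsViaChiMono`. -/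
def IsIndChiMono (χ : ModuleFunction A) {U V : Type} [AddCommGroup U] [Module A U]
    [AddCommGroup V] [Module A V] (j : U →ₗ[A] V) : Prop :=
  ∀ (X Z : Type) [AddCommGroup X] [Module A X] [AddCommGroup Z] [Module A Z]
    [Module.FinitePresentation A X] [Module.FinitePresentation A Z]
    (k : X →ₗ[A] Z) (x : X →ₗ[A] U) (z : Z →ₗ[A] V), j ∘ₗ x = z ∘ₗ k → FactorsViaChiMono χ k x

variable {χ : ModuleFunction A}
  {U V W X Z F : Type} [AddCommGroup U] [Module A U] [AddCommGroup V] [Module A V]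
  [AddCommGroup W] [Module A W] [AddCommGroup X] [Module A X] [AddCommGroup Z] [Module A Z]
  [AddCommGroup F] [Module A F]

theorem FactorsViaChiMono.pushoutInl (hχ : IsSubadditive A χ) [Module.FinitePresentation A X]
    {g : W →ₗ[A] F} {l : W →ₗ[A] X} {x : X →ₗ[A] U} (h : FactorsViaChiMono χ g (x ∘ₗ l))
    [Module.Finite A W] : FactorsViaChiMono χ (LinearPushout.inl l g) x := by
  obtain ⟨X', Y', _, _, _, _, _, _, a, x', s, h, hs, hx', hh⟩ := h
  refine ⟨LinearPushout l a, LinearPushout (LinearPushout.inr l a) s, _, _, _, _, inferInstance,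
    inferInstance, LinearPushout.inl l a, LinearPushout.desc x x' hx'.symm,
    LinearPushout.inl _ s, LinearPushout.desc (LinearPushout.inl _ s ∘ₗ LinearPushout.inl l a)
      (LinearPushout.inr _ s ∘ₗ h) ?_, hs.pushoutInl hχ _, LinearPushout.desc_comp_inl .., ?_⟩
  · rw [LinearMap.comp_assoc, LinearPushout.inl_comp, ← LinearMap.comp_assoc,
      LinearPushout.inl_comp, LinearMap.comp_assoc, ← hh, LinearMap.comp_assoc]
  · exact LinearPushout.desc_comp_inl ..

namespace IsIndChiMono

theorem of_free (hχ : IsSubadditive A χ) {j : U →ₗ[A] V}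
    (hj : ∀ (m n : ℕ) (k : (Fin m → A) →ₗ[A] (Fin n → A)) (x : (Fin m → A) →ₗ[A] U)
      (z : (Fin n → A) →ₗ[A] V), j ∘ₗ x = z ∘ₗ k → FactorsViaChiMono χ k x) :
    IsIndChiMono χ j := by
  intro X Z _ _ _ _ _ _ k x z hxz
  obtain ⟨m, n, l, g, e, rfl⟩ := exists_equiv_pushout_of_free k
  have hfree : FactorsViaChiMono χ g (x ∘ₗ l) := by
    refine hj m n g (x ∘ₗ l) (z ∘ₗ e.toLinearMap ∘ₗ LinearPushout.inr l g) ?_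
    simp only [LinearMap.comp_assoc, ← LinearPushout.inl_comp]
    simp only [← LinearMap.comp_assoc, hxz]
  obtain ⟨X', Y', _, _, _, _, _, _, a, x', s, h, hs, hx', hh⟩ := hfree.pushoutInl hχ
  exact ⟨X', Y', _, _, _, _, ‹_›, ‹_›, a, x', s, h ∘ₗ e.symm.toLinearMap, hs, hx', by
    rw [← hh]; ext; simp⟩

protected theorem id (hχ : IsSubadditive A χ) : IsIndChiMono χ (LinearMap.id : U →ₗ[A] U) :=
  fun _ Z _ _ _ _ _ _ k _ z hxz ↦ ⟨Z, Z, _, _, _, _, ‹_›, ‹_›, k, z, .id, .id, .id hχ,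
    hxz.symm, rfl⟩

theorem comp (hχ : IsSubadditive A χ) {j' : V →ₗ[A] W} {j : U →ₗ[A] V} (hj' : IsIndChiMono χ j')
    (hj : IsIndChiMono χ j) : IsIndChiMono χ (j' ∘ₗ j) := by
  intro X Z _ _ _ _ _ _ k x z hxz
  obtain ⟨X', Y', _, _, _, _, _, _, a, x', s, h, hs, hx', hh⟩ := hj' X Z k (j ∘ₗ x) z hxz
  obtain ⟨X'', Y'', _, _, _, _, _, _, b, x'', t, h', ht, hx'', hh'⟩ := hj X X' a x x' hx'.symm
  refine ⟨X'', LinearPushout h' s, _, _, _, _, ‹_›, inferInstance, b, x'',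
    LinearPushout.inl h' s ∘ₗ t, LinearPushout.inr h' s ∘ₗ h, (hs.pushoutInl hχ h').comp hχ ht,
    hx'', ?_⟩
  rw [LinearMap.comp_assoc, hh, ← LinearMap.comp_assoc, ← LinearPushout.inl_comp,
    LinearMap.comp_assoc, hh', LinearMap.comp_assoc]

theorem pushoutInl (hχ : IsSubadditive A χ) {j : U →ₗ[A] V} (hj : IsIndChiMono χ j)
    (u : U →ₗ[A] W) : IsIndChiMono χ (LinearPushout.inl u j) := by
  refine of_free hχ fun m n k x z hxz ↦ ?_
  obtain ⟨q, hq⟩ := Module.projective_lifting_property (Submodule.mkQ _) z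
    (Submodule.mkQ_surjective _)
  have hrange (ξ : Fin m → A) :
      (q ∘ₗ k - LinearMap.inl A W V ∘ₗ x) ξ ∈ LinearMap.range (u.prod (-j)) := by
    rw [← Submodule.Quotient.mk_eq_zero, LinearMap.sub_apply, Submodule.Quotient.mk_sub,
      sub_eq_zero]
    have h := LinearMap.congr_fun hxz ξ
    rw [← hq] at h
    exact h.symm
  obtain ⟨t, ht⟩ := Module.projective_lifting_property (u.prod (-j)).rangeRestrict
    (LinearMap.codRestrict _ _ hrange) (u.prod (-j)).surjective_rangeRestrict
  have ht' : u.prod (-j) ∘ₗ t = q ∘ₗ k - LinearMap.inl A W V ∘ₗ x :=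
    LinearMap.ext fun ξ ↦ congrArg Subtype.val (LinearMap.congr_fun ht ξ)
  have hfst : u ∘ₗ t = LinearMap.fst A W V ∘ₗ q ∘ₗ k - x := by
    simpa [LinearMap.comp_sub, ← LinearMap.comp_assoc] using congrArg (LinearMap.fst A W V ∘ₗ ·) ht'
  have hsnd : j ∘ₗ t = (-(LinearMap.snd A W V ∘ₗ q)) ∘ₗ k := by
    rw [eq_comm, LinearMap.neg_comp, neg_eq_iff_eq_neg]
    simpa [LinearMap.comp_sub, ← LinearMap.comp_assoc] using
      (congrArg (LinearMap.snd A W V ∘ₗ ·) ht').symm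
  obtain ⟨X', Y', _, _, _, _, _, _, a, x', s, h, hs, hx', hh⟩ := hj _ _ k t _ hsnd
  refine ⟨(Fin n → A) × X', (Fin n → A) × Y', _, _, _, _, inferInstance, inferInstance,
    k.prod (-a), (LinearMap.fst A W V ∘ₗ q).coprod (u ∘ₗ x'), LinearMap.id.prodMap s,
    LinearMap.id.prod (-h), (IsChiMono.id hχ).prodMap hχ hs, ?_, ?_⟩
  · rw [LinearMap.coprod_comp_prod, LinearMap.comp_neg, LinearMap.comp_assoc, LinearMap.comp_assoc,
      hx', hfst]
    abel
  · exact LinearMap.ext fun ξ ↦ Prod.ext rfl (by simpa using LinearMap.congr_fun hh ξ)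

theorem mapRange (hχ : IsSubadditive A χ) {ι : Type} {U V : ι → Type} [∀ i, AddCommGroup (U i)]
    [∀ i, Module A (U i)] [∀ i, AddCommGroup (V i)] [∀ i, Module A (V i)]
    [∀ i, Module.FinitePresentation A (U i)] [∀ i, Module.FinitePresentation A (V i)]
    {s : ∀ i, U i →ₗ[A] V i} (hs : ∀ i, IsChiMono χ (s i)) :
    IsIndChiMono χ (DFinsupp.mapRange.linearMap s) := by
  classical
  intro X Z _ _ _ _ _ _ k x z hxz
  obtain ⟨S, hS⟩ := Module.Finite.fg_top (R := A) (M := X)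
  let T := S.biUnion fun ξ ↦ (x ξ).support
  refine ⟨∀ i : (T : Set ι), U i, ∀ i : (T : Set ι), V i, _, _, _, _, inferInstance, inferInstance,
    LinearMap.pi fun i ↦ DFinsupp.lapply i.1 ∘ₗ x, DFinsupp.lmk T, LinearMap.piMap fun i ↦ s i.1,
    LinearMap.pi fun i ↦ DFinsupp.lapply i.1 ∘ₗ z, .piMap hχ fun i ↦ hs i.1, ?_, ?_⟩
  · refine LinearMap.ext_on hS fun ξ hξ ↦ DFinsupp.ext fun i ↦ ?_
    change DFinsupp.mk T (fun i ↦ x ξ i) i = x ξ i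
    rw [DFinsupp.mk_apply]
    split_ifs with hi
    · rfl
    · by_contra hne
      exact hi (Finset.mem_biUnion.2 ⟨ξ, hξ, DFinsupp.mem_support_iff.2 (Ne.symm hne)⟩)
  · ext ξ i
    have h := DFunLike.congr_fun (LinearMap.congr_fun hxz ξ) i.1
    simpa using h.symm

theorem chi_eq_zero (hχ : IsSubadditive A χ) [Module.FinitePresentation A X]
    (h : IsIndChiMono χ (0 : X →ₗ[A] V)) : χ X = 0 := by
  obtain ⟨X', Y', _, _, _, _, _, _, a, x', s, h, hs, hx', hh⟩ :=
    h X PUnit 0 .id 0 rfl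
  have hzero : LinearPushout.inl x' s = 0 := by
    rw [← LinearMap.comp_id (LinearPushout.inl x' s), ← hx', ← LinearMap.comp_assoc,
      LinearPushout.inl_comp, LinearMap.comp_assoc, ← hh, LinearMap.comp_zero, LinearMap.comp_zero]
  exact (isChiMono_zero_iff hχ).1 (hzero ▸ hs.pushoutInl hχ x')

end IsIndChiMono

end IndChiMono

/-- The module `M` is injective along `f : X → Y` if every map `X → M` extends along `f`. -/
def IsInjectiveAlong {A : Type*} [Ring A] {X Y : Type*} [AddCommGroup X] [Module A X]
    [AddCommGroup Y] [Module A Y] (M : Type*) [AddCommGroup M] [Module A M] (f : X →ₗ[A] Y) :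
    Prop :=
  ∀ x : X →ₗ[A] M, ∃ y : Y →ₗ[A] M, y ∘ₗ f = x

/-- The module `M` is injective along all `χ`-monomorphisms of finitely presented modules. -/
def IsChiInjective {A : Type} [Ring A] (χ : ModuleFunction A) (M : Type) [AddCommGroup M]
    [Module A M] : Prop :=
  ∀ (X Y : Type) [AddCommGroup X] [Module A X] [AddCommGroup Y] [Module A Y]
    [Module.FinitePresentation A X] [Module.FinitePresentation A Y] (f : X →ₗ[A] Y),
    IsChiMono χ f → IsInjectiveAlong M f

/-- The map `j : P → P'` solves all extension problems along `χ`-monomorphisms with values in `P`: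
for every `χ`-monomorphism `f : X → Y` of finitely presented modules and every `x : X → P` the map
`j ∘ x` extends along `f`. -/
def SolvesChiExtensions {A : Type} [Ring A] (χ : ModuleFunction A) {P P' : Type} [AddCommGroup P]
    [Module A P] [AddCommGroup P'] [Module A P'] (j : P →ₗ[A] P') : Prop :=
  ∀ (X Y : Type) [AddCommGroup X] [Module A X] [AddCommGroup Y] [Module A Y]
    [Module.FinitePresentation A X] [Module.FinitePresentation A Y] (f : X →ₗ[A] Y),
    IsChiMono χ f → ∀ x : X →ₗ[A] P, ∃ y : Y →ₗ[A] P', y ∘ₗ f = j ∘ₗ x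

section ChiInjective

variable {A : Type} [Ring A] {χ : ModuleFunction A}

/-- The extension problems along `χ`-monomorphisms with values in `P`. The finitely presented
modules are restricted to cokernels of maps of finite free modules, so that the problems form a
small type. -/
structure ChiExtensionProblem (χ : ModuleFunction A) (P : Type) [AddCommGroup P] [Module A P] where
  {m n m' n' : ℕ}
  {r : (Fin m → A) →ₗ[A] (Fin n → A)}
  {r' : (Fin m' → A) →ₗ[A] (Fin n' → A)}
  f : ((Fin n → A) ⧸ LinearMap.range r) →ₗ[A] ((Fin n' → A) ⧸ LinearMap.range r')
  isChiMono : IsChiMono χ f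
  x : ((Fin n → A) ⧸ LinearMap.range r) →ₗ[A] P

theorem exists_isIndChiMono_extending_family (hχ : IsSubadditive A χ) {ι : Type} {U V : ι → Type}
    [∀ i, AddCommGroup (U i)] [∀ i, Module A (U i)] [∀ i, AddCommGroup (V i)]
    [∀ i, Module A (V i)] [∀ i, Module.FinitePresentation A (U i)]
    [∀ i, Module.FinitePresentation A (V i)] {s : ∀ i, U i →ₗ[A] V i}
    (hs : ∀ i, IsChiMono χ (s i)) {P : Type} [AddCommGroup P] [Module A P]
    (x : ∀ i, U i →ₗ[A] P) :
    ∃ (P' : ModuleCat.{0} A) (j : P →ₗ[A] P'), IsIndChiMono χ j ∧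
      ∀ i, ∃ y : V i →ₗ[A] P', y ∘ₗ s i = j ∘ₗ x i := by
  classical
  let u : (Π₀ i, U i) →ₗ[A] P := DFinsupp.lsum ℕ x
  obtain ⟨S, hS⟩ : ∃ S : (Π₀ i, U i) →ₗ[A] (Π₀ i, V i), S = DFinsupp.mapRange.linearMap s :=
    ⟨_, rfl⟩
  refine ⟨.of A (LinearPushout u S), LinearPushout.inl u S,
    (hS ▸ IsIndChiMono.mapRange hχ hs :).pushoutInl hχ u,
    fun i ↦ ⟨LinearPushout.inr u S ∘ₗ DFinsupp.lsingle i, ?_⟩⟩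
  have hu : u ∘ₗ DFinsupp.lsingle i = x i := by ext; simp [u]
  have hs : S ∘ₗ DFinsupp.lsingle i = DFinsupp.lsingle i ∘ₗ s i := by ext; simp [hS]
  rw [LinearMap.comp_assoc, ← hs, ← hu, ← LinearMap.comp_assoc, ← LinearPushout.inl_comp,
    LinearMap.comp_assoc]

theorem exists_isIndChiMono_solvesChiExtensions (hχ : IsSubadditive A χ) (P : ModuleCat.{0} A) :
    ∃ (P' : ModuleCat.{0} A) (j : P →ₗ[A] P'), IsIndChiMono χ j ∧
      SolvesChiExtensions χ j := by
  obtain ⟨P', j, hj, hext⟩ := exists_isIndChiMono_extending_family hχ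
    (fun t : ChiExtensionProblem χ P ↦ t.isChiMono) fun t ↦ t.x
  refine ⟨P', j, hj, fun X Y _ _ _ _ _ _ f hf x ↦ ?_⟩
  obtain ⟨_, _, p, _, hp, hrp⟩ := Module.FinitePresentation.exists_fin' A X
  obtain ⟨_, _, p', _, hp', hrp'⟩ := Module.FinitePresentation.exists_fin' A Y
  let e := hrp.linearEquivOfSurjective hp
  let e' := hrp'.linearEquivOfSurjective hp'
  obtain ⟨y, hy⟩ := hext
    { f := e'.symm.toLinearMap ∘ₗ f ∘ₗ e.toLinearMap
      isChiMono := (IsChiMono.of_equiv hχ e'.symm).comp hχ (hf.comp hχ (.of_equiv hχ e))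
      x := x ∘ₗ e.toLinearMap }
  refine ⟨y ∘ₗ e'.symm.toLinearMap, LinearMap.ext fun ξ ↦ ?_⟩
  simpa using LinearMap.congr_fun hy (e.symm ξ)

open CategoryTheory in
theorem exists_sequence_solvesChiExtensions (hχ : IsSubadditive A χ) (X₀ : Type) [AddCommGroup X₀]
    [Module A X₀] :
    ∃ (F : ℕ ⥤ ModuleCat.{0} A) (x : X₀ →ₗ[A] F.obj 0), IsIndChiMono χ x ∧
      ∀ n : ℕ, IsIndChiMono χ (F.map (homOfLE n.le_succ)).hom ∧
        SolvesChiExtensions χ (F.map (homOfLE n.le_succ)).hom := by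
  choose next j hj using exists_isIndChiMono_solvesChiExtensions hχ
  let P (n : ℕ) : ModuleCat.{0} A := n.rec (.of A X₀) fun _ ↦ next
  let t (n : ℕ) : P n ⟶ P (n + 1) := ModuleCat.ofHom (j (P n))
  refine ⟨Functor.ofSequence t, (.id : X₀ →ₗ[A] X₀), .id hχ, fun n ↦ ?_⟩
  rw [Functor.ofSequence_map_homOfLE_succ]
  exact hj (P n)

open CategoryTheory in
theorem exists_isChiInjective (hχ : IsSubadditive A χ) {X₀ : Type} [AddCommGroup X₀] [Module A X₀]
    [Module.FinitePresentation A X₀] (h₀ : χ X₀ ≠ 0) :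
    ∃ (M : Type) (_ : AddCommGroup M) (_ : Module A M), Nontrivial M ∧ IsChiInjective χ M := by
  obtain ⟨F, x₀, hx₀, hF⟩ := exists_sequence_solvesChiExtensions hχ X₀
  let t (m n : ℕ) (h : m ≤ n) : F.obj m →ₗ[A] F.obj n := (F.map (homOfLE h)).hom
  have ht_self (n : ℕ) : t n n le_rfl = .id := congrArg ModuleCat.Hom.hom (F.map_id n)
  have ht_comp (k m n : ℕ) (hkm : k ≤ m) (hmn : m ≤ n) :
      t m n hmn ∘ₗ t k m hkm = t k n (hkm.trans hmn) :=
    congrArg ModuleCat.Hom.hom (F.map_comp (homOfLE hkm) (homOfLE hmn)).symm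
  have : DirectedSystem (fun n ↦ (F.obj n : Type)) (t · · ·) :=
    ⟨fun n ↦ LinearMap.congr_fun (ht_self n),
      fun _ _ _ h h' ↦ DFunLike.congr_fun (ht_comp _ _ _ h h')⟩
  refine ⟨Module.DirectLimit (fun n ↦ F.obj n) t, inferInstance, inferInstance, ?_, ?_⟩
  · by_contra hM
    rw [not_nontrivial_iff_subsingleton] at hM
    obtain ⟨n, _, hzero⟩ := exists_transition_comp_eq_zero (f := t) (x := x₀)
      (Subsingleton.elim _ _)
    have hind : IsIndChiMono χ (t 0 n n.zero_le) := by
      clear hzero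
      induction n with
      | zero => exact ht_self 0 ▸ .id hχ
      | succ n ih => exact ht_comp 0 n (n + 1) n.zero_le n.le_succ ▸ (hF n).1.comp hχ (ih n.zero_le)
    exact h₀ (IsIndChiMono.chi_eq_zero hχ (hzero ▸ hind.comp hχ hx₀))
  · intro X Y _ _ _ _ _ _ f hf x
    obtain ⟨n, x', rfl⟩ := exists_directLimit_of_comp_eq x
    obtain ⟨y, hy⟩ := (hF n).2 X Y f hf x'
    refine ⟨Module.DirectLimit.of A ℕ (fun n ↦ F.obj n) t (n + 1) ∘ₗ y, ?_⟩
    rw [LinearMap.comp_assoc, hy]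
    exact LinearMap.ext fun ξ ↦ Module.DirectLimit.of_f

end ChiInjective

/-- A positive primitive formula of sort `X`, encoded as a linear map from `X` to a finitely
presented module. -/
structure PPFormula (A : Type) [Ring A] (X : Type) [AddCommGroup X] [Module A X] where
  {target : Type}
  [addCommGroup : AddCommGroup target]
  [module : Module A target]
  [finitePresentation : Module.FinitePresentation A target]
  map : X →ₗ[A] target

attribute [instance] PPFormula.addCommGroup PPFormula.module PPFormula.finitePresentation

namespace PPFormula

variable {A : Type} [Ring A] {X M N : Type} [AddCommGroup X] [Module A X] [AddCommGroup M]
  [Module A M] [AddCommGroup N] [Module A N]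

/-- The solution set of a positive primitive formula in `M`: the maps `X → M` which extend along
the map of the formula. -/
def realize (φ : PPFormula A X) (M : Type) [AddCommGroup M] [Module A M] :
    Submodule (Module.End A M) (X →ₗ[A] M) :=
  LinearMap.range (LinearMap.lcomp (Module.End A M) M φ.map)

theorem mem_realize {φ : PPFormula A X} {x : X →ₗ[A] M} :
    x ∈ φ.realize M ↔ ∃ y : φ.target →ₗ[A] M, y ∘ₗ φ.map = x := .rfl

theorem comp_mem_realize {φ : PPFormula A X} {x : X →ₗ[A] M} (hx : x ∈ φ.realize M)
    (e : M →ₗ[A] N) : e ∘ₗ x ∈ φ.realize N := by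
  obtain ⟨y, rfl⟩ := mem_realize.1 hx
  exact mem_realize.2 ⟨e ∘ₗ y, rfl⟩

theorem realize_le_of_comp_eq {φ ψ : PPFormula A X} (f : φ.target →ₗ[A] ψ.target)
    (hf : f ∘ₗ φ.map = ψ.map) : ψ.realize M ≤ φ.realize M := by
  rintro x ⟨y, rfl⟩
  exact mem_realize.2 ⟨y ∘ₗ f, by rw [LinearMap.comp_assoc, hf]; rfl⟩

theorem realize_le_iff {φ ψ : PPFormula A X} :
    φ.realize M ≤ ψ.realize M ↔ IsInjectiveAlong M (LinearPushout.inl φ.map ψ.map) := by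
  constructor
  · exact fun h y ↦ LinearPushout.exists_comp_inl_eq_iff.2 (h ⟨y, rfl⟩)
  · rintro h _ ⟨y, rfl⟩
    exact LinearPushout.exists_comp_inl_eq_iff.1 (h y)

/-- The formula of sort `X` expressing that the restriction of a map along `g` satisfies `φ`. -/
def comap [Module.FinitePresentation A X] {K : Type} [AddCommGroup K] [Module A K]
    [Module.Finite A K] (φ : PPFormula A K) (g : K →ₗ[A] X) : PPFormula A X :=
  ⟨LinearPushout.inl g φ.map⟩

theorem mem_realize_comap [Module.FinitePresentation A X] {K : Type} [AddCommGroup K] [Module A K]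
    [Module.Finite A K] {φ : PPFormula A K} {g : K →ₗ[A] X} {x : X →ₗ[A] M} :
    x ∈ (φ.comap g).realize M ↔ x ∘ₗ g ∈ φ.realize M :=
  LinearPushout.exists_comp_inl_eq_iff

theorem exists_free_mem_realize_iff [Module.Finite A X] (φ : PPFormula A X) :
    ∃ (m n : ℕ) (l : (Fin m → A) →ₗ[A] X) (g : (Fin m → A) →ₗ[A] (Fin n → A)),
      ∀ (M : Type) [AddCommGroup M] [Module A M] (x : X →ₗ[A] M),
        x ∈ φ.realize M ↔ x ∘ₗ l ∈ (PPFormula.mk g).realize M := by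
  obtain ⟨m, n, l, g, e, he⟩ := exists_equiv_pushout_of_free φ.map
  refine ⟨m, n, l, g, fun M _ _ x ↦ ?_⟩
  rw [mem_realize, mem_realize, ← LinearPushout.exists_comp_inl_eq_iff, ← he]
  constructor
  · rintro ⟨y, rfl⟩
    exact ⟨y ∘ₗ e.toLinearMap, rfl⟩
  · rintro ⟨w, rfl⟩
    exact ⟨w ∘ₗ e.symm.toLinearMap, by ext; simp⟩

/-- The conjunction of two positive primitive formulas. -/
def inf [Module.Finite A X] (φ ψ : PPFormula A X) : PPFormula A X :=
  ⟨LinearPushout.inl φ.map ψ.map ∘ₗ φ.map⟩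

theorem realize_inf [Module.Finite A X] (φ ψ : PPFormula A X) :
    (φ.inf ψ).realize M = φ.realize M ⊓ ψ.realize M := by
  refine le_antisymm (le_inf (realize_le_of_comp_eq (φ := φ) (LinearPushout.inl ..) rfl)
    (realize_le_of_comp_eq (φ := ψ) (LinearPushout.inr ..) (LinearPushout.inl_comp ..).symm)) ?_
  rintro _ ⟨⟨y, rfl⟩, z, hz⟩
  exact mem_realize.2 ⟨LinearPushout.desc y z hz.symm,
    congrArg (· ∘ₗ φ.map) (LinearPushout.desc_comp_inl y z hz.symm)⟩

/-- The sum of two positive primitive formulas, satisfied by the sums of solutions. -/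
def sup (φ ψ : PPFormula A X) : PPFormula A X := ⟨φ.map.prod ψ.map⟩

theorem realize_sup (φ ψ : PPFormula A X) :
    (φ.sup ψ).realize M = φ.realize M ⊔ ψ.realize M := by
  refine le_antisymm ?_ (sup_le (realize_le_of_comp_eq (φ := φ.sup ψ) (LinearMap.fst ..) rfl)
    (realize_le_of_comp_eq (φ := φ.sup ψ) (LinearMap.snd ..) rfl))
  rintro _ ⟨(y : φ.target × ψ.target →ₗ[A] M), rfl⟩
  refine Submodule.mem_sup.2 ⟨_, ⟨y ∘ₗ LinearMap.inl .., rfl⟩, _, ⟨y ∘ₗ LinearMap.inr .., rfl⟩, ?_⟩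
  ext x
  change y (φ.map x, 0) + y (0, ψ.map x) = y (φ.map x, ψ.map x)
  rw [← map_add, Prod.mk_add_mk, add_zero, zero_add]

end PPFormula

/-- The descending chain condition on the subgroups of `X → N` defined by positive primitive
formulas. -/
def PPDCC {A : Type} [Ring A] (X N : Type) [AddCommGroup X] [Module A X] [AddCommGroup N]
    [Module A N] : Prop :=
  WellFounded fun φ ψ : PPFormula A X ↦ φ.realize N < ψ.realize N

/-- Every positive primitive condition satisfied by (restrictions of) `p` is satisfied by `q`:
the positive primitive type of `p` in `M` is contained in that of `q` in `N`. -/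
def PPTypeLE {A : Type} [Ring A] {X M N : Type} [AddCommGroup X] [Module A X] [AddCommGroup M]
    [Module A M] [AddCommGroup N] [Module A N] (p : X →ₗ[A] M) (q : X →ₗ[A] N) : Prop :=
  ∀ (K : Type) [AddCommGroup K] [Module A K] [Module.FinitePresentation A K] (γ : K →ₗ[A] X)
    (φ : PPFormula A K), p ∘ₗ γ ∈ φ.realize M → q ∘ₗ γ ∈ φ.realize N

namespace PPTypeLE

variable {A : Type} [Ring A] {X X' M N B : Type} [AddCommGroup X] [Module A X] [AddCommGroup X']
  [Module A X'] [AddCommGroup M] [Module A M] [AddCommGroup N] [Module A N] [AddCommGroup B]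
  [Module A B] {p : X →ₗ[A] M} {q : X →ₗ[A] N}

theorem of_comp (p : X →ₗ[A] M) (e : M →ₗ[A] N) : PPTypeLE p (e ∘ₗ p) :=
  fun _ _ _ _ _ _ h ↦ PPFormula.comp_mem_realize h e

theorem comp (h : PPTypeLE p q) (g : X' →ₗ[A] X) : PPTypeLE (p ∘ₗ g) (q ∘ₗ g) :=
  fun K _ _ _ γ φ ↦ h K (g ∘ₗ γ) φ

theorem of_comp_surjective {g : X' →ₗ[A] X} (hg : Function.Surjective g)
    (h : PPTypeLE (p ∘ₗ g) (q ∘ₗ g)) : PPTypeLE p q := by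
  intro K _ _ _ γ φ hφ
  obtain ⟨m, n, l, r, hr⟩ := φ.exists_free_mem_realize_iff
  obtain ⟨γ', hγ'⟩ := Module.projective_lifting_property g (γ ∘ₗ l) hg
  rw [hr, LinearMap.comp_assoc, ← hγ', ← LinearMap.comp_assoc] at hφ ⊢
  exact h _ γ' _ hφ

theorem of_forall_mem_realize [Module.FinitePresentation A X]
    (h : ∀ φ : PPFormula A X, p ∈ φ.realize M → q ∈ φ.realize N) : PPTypeLE p q :=
  fun _ _ _ _ γ φ hφ ↦ PPFormula.mem_realize_comap.1
    (h (φ.comap γ) (PPFormula.mem_realize_comap.2 hφ))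

theorem eq_zero (h : PPTypeLE p q) {x : X} (hx : p x = 0) : q x = 0 := by
  obtain ⟨y, hy⟩ := h A (LinearMap.toSpanSingleton A X x) ⟨(0 : A →ₗ[A] PUnit)⟩
    ⟨0, by ext; simp [hx]⟩
  simpa using ((map_zero y).symm.trans (LinearMap.congr_fun hy 1)).symm

end PPTypeLE

/-- A system of linear conditions over `p : X → M` on a map `B → M` which is solved by `m`. The
conditions say that `n` together with `p` factors through the maps `k` and `η` in the manner in
which `m` does by means of `y`. -/
structure PPCondition {A : Type} [Ring A] {X M B : Type} [AddCommGroup X] [Module A X]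
    [AddCommGroup M] [Module A M] [AddCommGroup B] [Module A B] (p : X →ₗ[A] M)
    (m : B →ₗ[A] M) where
  {K Y : Type}
  [addCommGroupK : AddCommGroup K]
  [moduleK : Module A K]
  [finitePresentationK : Module.FinitePresentation A K]
  [addCommGroupY : AddCommGroup Y]
  [moduleY : Module A Y]
  [finitePresentationY : Module.FinitePresentation A Y]
  γ : K →ₗ[A] X
  k : K →ₗ[A] Y
  η : B →ₗ[A] Y
  y : Y →ₗ[A] M
  comp_k : y ∘ₗ k = p ∘ₗ γ
  comp_η : y ∘ₗ η = m

attribute [instance] PPCondition.addCommGroupK PPCondition.moduleK PPCondition.finitePresentationK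
  PPCondition.addCommGroupY PPCondition.moduleY PPCondition.finitePresentationY

namespace PPCondition

variable {A : Type} [Ring A] {X M N B : Type} [AddCommGroup X] [Module A X] [AddCommGroup M]
  [Module A M] [AddCommGroup N] [Module A N] [AddCommGroup B] [Module A B] {p : X →ₗ[A] M}
  {m : B →ₗ[A] M} {q : X →ₗ[A] N}

/-- The maps `B → N` satisfying the conditions `d` relative to `q` in place of `p`. -/
def solutions (d : PPCondition p m) (q : X →ₗ[A] N) : Set (B →ₗ[A] N) :=
  {n | ∃ y : d.Y →ₗ[A] N, y ∘ₗ d.k = q ∘ₗ d.γ ∧ y ∘ₗ d.η = n}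

/-- The homogeneous version of the conditions `d`. -/
def formula (d : PPCondition p m) : PPFormula A B := ⟨(LinearMap.range d.k).mkQ ∘ₗ d.η⟩

theorem mem_realize_formula {d : PPCondition p m} {n : B →ₗ[A] N} :
    n ∈ d.formula.realize N ↔ ∃ y : d.Y →ₗ[A] N, y ∘ₗ d.k = 0 ∧ y ∘ₗ d.η = n := by
  constructor
  · rintro ⟨(z : d.Y ⧸ LinearMap.range d.k →ₗ[A] N), rfl⟩
    refine ⟨z ∘ₗ (LinearMap.range d.k).mkQ, ?_, rfl⟩
    rw [LinearMap.comp_assoc, LinearMap.range_mkQ_comp, LinearMap.comp_zero]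
  · rintro ⟨y, hy, rfl⟩
    exact ⟨(LinearMap.range d.k).liftQ y (LinearMap.range_le_ker_iff.2 hy), rfl⟩

theorem sub_mem_realize_formula {d : PPCondition p m} {n n' : B →ₗ[A] N} (hn : n ∈ d.solutions q)
    (hn' : n' ∈ d.solutions q) : n' - n ∈ d.formula.realize N := by
  obtain ⟨y, hy, rfl⟩ := hn
  obtain ⟨y', hy', rfl⟩ := hn'
  exact mem_realize_formula.2 ⟨y' - y, by rw [LinearMap.sub_comp, hy, hy', sub_self],
    LinearMap.sub_comp ..⟩

theorem add_mem_solutions {d : PPCondition p m} {n c : B →ₗ[A] N} (hn : n ∈ d.solutions q)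
    (hc : c ∈ d.formula.realize N) : n + c ∈ d.solutions q := by
  obtain ⟨y, hy, rfl⟩ := hn
  obtain ⟨z, hz, rfl⟩ := mem_realize_formula.1 hc
  exact ⟨y + z, by rw [LinearMap.add_comp, hy, hz, add_zero], LinearMap.add_comp ..⟩

theorem realize_formula_le {d d' : PPCondition p m} (hne : (d'.solutions q).Nonempty)
    (h : d'.solutions q ⊆ d.solutions q) : d'.formula.realize N ≤ d.formula.realize N := by
  intro c hc
  obtain ⟨n, hn⟩ := hne
  simpa using sub_mem_realize_formula (h hn) (h (add_mem_solutions hn hc))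

theorem solutions_nonempty (h : PPTypeLE p q) (d : PPCondition p m) :
    (d.solutions q).Nonempty := by
  obtain ⟨y, hy⟩ := h d.K d.γ ⟨d.k⟩ ⟨d.y, d.comp_k⟩
  exact ⟨y ∘ₗ d.η, y, hy, rfl⟩

theorem exists_solutions_subset_inter [Module.Finite A B] (d d' : PPCondition p m) :
    ∃ c : PPCondition p m, ∀ (N : Type) [AddCommGroup N] [Module A N] (q : X →ₗ[A] N),
      c.solutions q ⊆ d.solutions q ∩ d'.solutions q := by
  let i : d.Y →ₗ[A] LinearPushout d.η d'.η := LinearPushout.inl ..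
  let i' : d'.Y →ₗ[A] LinearPushout d.η d'.η := LinearPushout.inr ..
  have hi : i ∘ₗ d.η = i' ∘ₗ d'.η := LinearPushout.inl_comp ..
  let y := LinearPushout.desc d.y d'.y (d.comp_η.trans d'.comp_η.symm)
  have hy : y ∘ₗ i = d.y := LinearPushout.desc_comp_inl ..
  have hy' : y ∘ₗ i' = d'.y := LinearPushout.desc_comp_inr ..
  let c : PPCondition p m :=
    { γ := d.γ.coprod d'.γ
      k := (i ∘ₗ d.k).coprod (i' ∘ₗ d'.k)
      η := i ∘ₗ d.η
      y := y
      comp_k := by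
        rw [LinearMap.comp_coprod, LinearMap.comp_coprod, ← LinearMap.comp_assoc, hy, d.comp_k,
          ← LinearMap.comp_assoc, hy', d'.comp_k]
      comp_η := by rw [← LinearMap.comp_assoc, hy, d.comp_η] }
  refine ⟨c, fun N _ _ q ↦ ?_⟩
  rintro _ ⟨z, hz, rfl⟩
  have hzk : ((z ∘ₗ i) ∘ₗ d.k).coprod ((z ∘ₗ i') ∘ₗ d'.k) = (q ∘ₗ d.γ).coprod (q ∘ₗ d'.γ) := by
    rw [← LinearMap.comp_coprod, ← hz, LinearMap.comp_coprod]
    rfl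
  exact ⟨⟨z ∘ₗ i, by simpa using congrArg (· ∘ₗ LinearMap.inl ..) hzk, rfl⟩,
    ⟨z ∘ₗ i', by simpa using congrArg (· ∘ₗ LinearMap.inr ..) hzk, congrArg (z ∘ₗ ·) hi.symm⟩⟩

theorem exists_forall_mem_solutions [Module.FinitePresentation A B] (h : PPTypeLE p q)
    (hN : PPDCC (A := A) B N) (m : B →ₗ[A] M) :
    ∃ n : B →ₗ[A] N, ∀ d : PPCondition p m, n ∈ d.solutions q := by
  let empty : PPCondition p m := ⟨(0 : B →ₗ[A] X), 0, .id, m, by simp, m.comp_id⟩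
  obtain ⟨_, ⟨d, rfl⟩, hmin⟩ := hN.has_min (Set.range (formula (p := p) (m := m)))
    ⟨_, empty, rfl⟩
  obtain ⟨n, hn⟩ := d.solutions_nonempty h
  refine ⟨n, fun d' ↦ ?_⟩
  obtain ⟨c, hc⟩ := d.exists_solutions_subset_inter d'
  obtain ⟨n', hn'⟩ := c.solutions_nonempty h
  have hle : c.formula.realize N ≤ d.formula.realize N :=
    realize_formula_le ⟨n', hn'⟩ ((hc N q).trans Set.inter_subset_left)
  have hsub := sub_mem_realize_formula (hc N q hn').1 hn
  rw [← hle.eq_of_not_lt (hmin _ ⟨c, rfl⟩)] at hsub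
  simpa using (hc N q (add_mem_solutions hn' hsub)).2

end PPCondition

namespace PPTypeLE

variable {A : Type} [Ring A] {X M N B : Type} [AddCommGroup X] [Module A X] [AddCommGroup M]
  [Module A M] [AddCommGroup N] [Module A N] [AddCommGroup B] [Module A B] {p : X →ₗ[A] M}
  {q : X →ₗ[A] N}

theorem exists_coprod [Module.FinitePresentation A B] (h : PPTypeLE p q)
    (hN : PPDCC (A := A) B N) (m : B →ₗ[A] M) :
    ∃ n : B →ₗ[A] N, PPTypeLE (p.coprod m) (q.coprod n) := by
  obtain ⟨n, hn⟩ := PPCondition.exists_forall_mem_solutions h hN m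
  refine ⟨n, fun K _ _ _ γ φ hφ ↦ ?_⟩
  obtain ⟨y, hy⟩ := PPFormula.mem_realize.1 hφ
  let d : PPCondition p m :=
    { γ := LinearMap.fst A X B ∘ₗ γ
      k := φ.map.prod (-(LinearMap.snd A X B ∘ₗ γ))
      η := LinearMap.inr A φ.target B
      y := y.coprod m
      comp_k := by
        rw [LinearMap.coprod_comp_prod, hy]
        ext
        simp
      comp_η := LinearMap.coprod_inr .. }
  obtain ⟨z, hz, rfl⟩ := hn d
  refine PPFormula.mem_realize.2 ⟨z ∘ₗ LinearMap.inl .., LinearMap.ext fun ξ ↦ ?_⟩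
  have h : z (φ.map ξ, -(γ ξ).2) = q (γ ξ).1 := LinearMap.congr_fun hz ξ
  change z (φ.map ξ, 0) = q (γ ξ).1 + z (0, (γ ξ).2)
  rw [← h, ← map_add, Prod.mk_add_mk, add_zero, neg_add_cancel]

theorem of_forall_fg (h : ∀ S : Submodule A X, S.FG → PPTypeLE (p ∘ₗ S.subtype) (q ∘ₗ S.subtype)) :
    PPTypeLE p q :=
  fun K _ _ _ γ φ ↦ h (LinearMap.range γ) (Submodule.fg_range γ) K γ.rangeRestrict φ

theorem restrict_sSup {c : Set (Submodule A X)} (hc : DirectedOn (· ≤ ·) c) (hne : c.Nonempty)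
    (h : ∀ S ∈ c, PPTypeLE (p ∘ₗ S.subtype) (q ∘ₗ S.subtype)) :
    PPTypeLE (p ∘ₗ (sSup c).subtype) (q ∘ₗ (sSup c).subtype) := by
  refine of_forall_fg fun T hT ↦ ?_
  have hT' : IsCompactElement (T.map (sSup c).subtype) :=
    (Submodule.fg_iff_compact _).1 (hT.map _)
  obtain ⟨S, hS, hTS⟩ := (CompleteLattice.isCompactElement_iff_le_of_directed_sSup_le _ _).1 hT' c
    hne hc (Submodule.map_subtype_le _ _)
  exact (h S hS).comp (((sSup c).subtype ∘ₗ T.subtype).codRestrict S fun t ↦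
    hTS (Submodule.mem_map_of_mem t.2))

/-- Extend `q` one element at a time to the graph of a map, by Zorn's lemma. -/
theorem exists_comp_eq (h : PPTypeLE p q) (hN : PPDCC (A := A) A N) :
    ∃ e : M →ₗ[A] N, e ∘ₗ p = q := by
  let P (Γ : Submodule A (M × N)) : Prop :=
    PPTypeLE (LinearMap.fst A M N ∘ₗ Γ.subtype) (LinearMap.snd A M N ∘ₗ Γ.subtype)
  have hP₀ : P (LinearMap.range (p.prod q)) :=
    .of_comp_surjective (p.prod q).surjective_rangeRestrict h
  obtain ⟨Γ, hle, hΓ, hmax⟩ : ∃ Γ, LinearMap.range (p.prod q) ≤ Γ ∧ Maximal P Γ := by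
    refine zorn_le_nonempty₀ {Γ | P Γ} (fun c hcP hc Γ hΓ ↦ ?_) _ hP₀
    exact ⟨sSup c, restrict_sSup hc.directedOn ⟨Γ, hΓ⟩ hcP, fun _ ↦ le_sSup⟩
  have hsurj (m : M) : ∃ n, (m, n) ∈ Γ := by
    obtain ⟨n, hn⟩ := hΓ.exists_coprod hN (LinearMap.toSpanSingleton A M m)
    let u : Γ × A →ₗ[A] M × N := Γ.subtype.coprod (LinearMap.toSpanSingleton A (M × N) (m, n 1))
    have hu : P (LinearMap.range u) := by
      refine of_comp_surjective u.surjective_rangeRestrict ?_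
      convert hn using 1
      · ext <;> simp [u]
      · ext <;> simp [u]
    have hΓu : Γ ≤ LinearMap.range u := fun z hz ↦ ⟨(⟨z, hz⟩, 0), by simp [u]⟩
    exact ⟨n 1, hmax hu hΓu ⟨(0, 1), by simp [u]⟩⟩
  have hinj : Function.Injective (Prod.fst ∘ Γ.subtype) := by
    refine (injective_iff_map_eq_zero (LinearMap.fst A M N ∘ₗ Γ.subtype)).2 fun z hz ↦ ?_
    exact Subtype.ext (Prod.ext hz (hΓ.eq_zero hz))
  obtain ⟨e, rfl⟩ := Submodule.exists_eq_graph ⟨hinj, fun m ↦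
    (hsurj m).elim fun n hn ↦ ⟨⟨(m, n), hn⟩, rfl⟩⟩
  exact ⟨e, LinearMap.ext fun x ↦ (hle ⟨x, rfl⟩ : q x = e (p x)).symm⟩

end PPTypeLE

theorem coe_compLength {R M : Type} [Ring R] [AddCommGroup M] [Module R M]
    (h : IsFiniteLength R M) : (compLength R M : ℕ∞) = Module.length R M := by
  have h' := isFiniteLength_iff_exists_compositionSeries.1 h
  rw [compLength, dif_pos h']
  exact Module.length_compositionSeries _ h'.choose_spec.1 h'.choose_spec.2

theorem length_hom_eq_of_exact {A S X Y Z M : Type*} [Ring A] [Ring S] [AddCommGroup X]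
    [Module A X] [AddCommGroup Y] [Module A Y] [AddCommGroup Z] [Module A Z] [AddCommGroup M]
    [Module A M] [Module S M] [SMulCommClass A S M] {f : X →ₗ[A] Y} {g : Y →ₗ[A] Z}
    (hfg : Function.Exact f g) (hg : Function.Surjective g) :
    Module.length S (Y →ₗ[A] M) =
      Module.length S (Z →ₗ[A] M) + Module.length S (LinearMap.range (f.lcomp S M)) := by
  refine Module.length_eq_add_of_exact (g.lcomp S M) (f.lcomp S M).rangeRestrict
    (LinearMap.lcomp_injective_of_surjective g hg) (f.lcomp S M).surjective_rangeRestrict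
    fun u ↦ ?_
  rw [← LinearMap.mem_ker, LinearMap.ker_rangeRestrict, LinearMap.mem_ker]
  refine ⟨exists_comp_eq_of_exact hfg hg, ?_⟩
  rintro ⟨v, rfl⟩
  exact LinearMap.ext fun x ↦ (congrArg v (hfg.apply_apply_eq_zero x)).trans v.map_zero

theorem PPDCC.of_isArtinian {A : Type} [Ring A] {X M : Type} [AddCommGroup X] [Module A X]
    [AddCommGroup M] [Module A M] [IsArtinian (Module.End A M) (X →ₗ[A] M)] :
    PPDCC (A := A) X M :=
  InvImage.wf (fun φ : PPFormula A X ↦ φ.realize M) wellFounded_lt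

namespace IsEndofinite

variable {A : Type} [Ring A] {M : Type} [AddCommGroup M] [Module A M] {X Y Z : Type}
  [AddCommGroup X] [Module A X] [AddCommGroup Y] [Module A Y] [AddCommGroup Z] [Module A Z]

theorem isFiniteLength_hom (hM : IsEndofinite A M) (X : Type) [AddCommGroup X] [Module A X]
    [Module.Finite A X] : IsFiniteLength (Module.End A M) (X →ₗ[A] M) := by
  obtain ⟨_, _⟩ := isFiniteLength_iff_isNoetherian_isArtinian.1 hM
  obtain ⟨n, π, hπ⟩ := Module.Finite.exists_fin' A X
  have hinj := LinearMap.lcomp_injective_of_surjective (S := Module.End A M) (N := M) π hπ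
  let e : ((Fin n → A) →ₗ[A] M) ≃ₗ[Module.End A M] (Fin n → M) :=
    (LinearMap.lsum A (fun _ : Fin n ↦ A) (Module.End A M)).symm ≪≫ₗ
      LinearEquiv.piCongrRight fun _ ↦ LinearMap.ringLmapEquivSelf A (Module.End A M) M
  have he : Function.Injective (e.toLinearMap ∘ₗ π.lcomp (Module.End A M) M) :=
    e.injective.comp hinj
  exact isFiniteLength_iff_isNoetherian_isArtinian.2
    ⟨isNoetherian_of_injective _ he, isArtinian_of_injective _ he⟩

theorem ppDCC (hM : IsEndofinite A M) : PPDCC (A := A) A M := by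
  obtain ⟨_, _⟩ := isFiniteLength_iff_isNoetherian_isArtinian.1 (hM.isFiniteLength_hom A)
  exact .of_isArtinian

theorem coe_chiMod (hM : IsEndofinite A M) (X : Type) [AddCommGroup X] [Module A X]
    [Module.Finite A X] :
    (chiMod A M X : ℕ∞) = Module.length (Module.End A M) (X →ₗ[A] M) :=
  coe_compLength (hM.isFiniteLength_hom X)

theorem chiMod_eq_of_exact (hM : IsEndofinite A M) [Module.Finite A X] [Module.Finite A Y]
    [Module.Finite A Z] {f : X →ₗ[A] Y} {g : Y →ₗ[A] Z} (hfg : Function.Exact f g)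
    (hg : Function.Surjective g) : (chiMod A M Y : ℕ∞) = chiMod A M Z +
      Module.length (Module.End A M) (LinearMap.range (f.lcomp (Module.End A M) M)) := by
  rw [hM.coe_chiMod, hM.coe_chiMod, length_hom_eq_of_exact hfg hg]

theorem isSubadditive_chiMod (hM : IsEndofinite A M) : IsSubadditive A (chiMod A M) := by
  refine ⟨fun X Y _ _ _ _ _ _ e ↦ ?_, fun X Y _ _ _ _ _ _ ↦ ?_,
    fun X Y Z _ _ _ _ _ _ _ _ _ f g hfg hg ↦ ?_⟩
  · rw [← ENat.natCast_inj, hM.coe_chiMod, hM.coe_chiMod]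
    exact (e.congrLeft M (Module.End A M)).length_eq
  · rw [← ENat.natCast_inj, Nat.cast_add, hM.coe_chiMod, hM.coe_chiMod, hM.coe_chiMod,
      ← Module.length_prod]
    exact (LinearMap.coprodEquiv (Module.End A M)).length_eq.symm
  · rw [← Nat.cast_le (α := ℕ∞), hM.chiMod_eq_of_exact hfg hg, Nat.cast_add, add_comm,
      hM.coe_chiMod X]
    gcongr
    exact Module.length_le_of_injective _ (Submodule.subtype_injective _)

theorem isChiMono_chiMod_iff (hM : IsEndofinite A M) [Module.Finite A X] [Module.Finite A Y]
    {f : X →ₗ[A] Y} : IsChiMono (chiMod A M) f ↔ IsInjectiveAlong M f := by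
  obtain ⟨_, _⟩ := isFiniteLength_iff_isNoetherian_isArtinian.1 (hM.isFiniteLength_hom X)
  have hY := hM.chiMod_eq_of_exact (LinearMap.exact_map_mkQ_range f) (Submodule.mkQ_surjective _)
  rw [IsChiMono, ← ENat.natCast_inj, Nat.cast_add, hY, add_comm,
    (ENat.add_right_injective_of_ne_top (ENat.natCast_ne_top _)).eq_iff, hM.coe_chiMod X]
  change _ ↔ Function.Surjective (f.lcomp (Module.End A M) M)
  rw [← LinearMap.range_eq_top]
  constructor
  · intro h
    by_contra hne
    exact (Submodule.length_lt hne).ne h.symm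
  · intro h
    rw [h, Module.length_top]

theorem chiMod_self_ne_zero (hM : IsEndofinite A M) [Nontrivial M] : chiMod A M A ≠ 0 := by
  rw [← Nat.cast_ne_zero (R := ℕ∞), hM.coe_chiMod,
    (LinearMap.ringLmapEquivSelf A (Module.End A M) M).length_eq]
  exact Module.length_pos.ne'

end IsEndofinite

section Indecomposable

variable {A : Type} [Ring A] {M : Type} [AddCommGroup M] [Module A M]

theorem isIndecomposableModule_iff_isIdempotentElem : IsIndecomposableModule A M ↔
    Nontrivial M ∧ ∀ f : Module.End A M, IsIdempotentElem f → f = 0 ∨ f = 1 := by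
  refine and_congr_right fun _ ↦ ⟨fun h f hf ↦ ?_, fun h N₁ N₂ _ _ _ _ e ↦ ?_⟩
  · have hc := LinearMap.IsIdempotentElem.isCompl hf
    rcases h _ _ _ _ _ _ (Submodule.prodEquivOfIsCompl _ _ hc).symm with h | h
    · exact .inl (LinearMap.range_eq_bot.1 (Submodule.subsingleton_iff_eq_bot.1 h))
    · right
      have hker := LinearMap.ker_eq_bot.1 (Submodule.subsingleton_iff_eq_bot.1 h)
      exact LinearMap.ext fun m ↦ hker (LinearMap.congr_fun hf.eq m)
  · let f : Module.End A M := e.symm.toLinearMap ∘ₗ .inl A N₁ N₂ ∘ₗ .fst A N₁ N₂ ∘ₗ e.toLinearMap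
    have hf : IsIdempotentElem f := LinearMap.ext fun m ↦ by simp [f]
    rcases h f hf with h | h
    · refine .inl (subsingleton_of_forall_eq 0 fun n ↦ ?_)
      simpa [f] using LinearMap.congr_fun h (e.symm (n, 0))
    · refine .inr (subsingleton_of_forall_eq 0 fun n ↦ ?_)
      simpa [f, eq_comm] using LinearMap.congr_fun h (e.symm (0, n))

theorem isIndecomposableModule_of_isNilpotent {x : M} (hx : x ≠ 0)
    (hnil : ∀ f : Module.End A M, f x = 0 → IsNilpotent f)
    (hret : ∀ f : Module.End A M, f x ≠ 0 → ∃ g : Module.End A M, g (f x) = x) :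
    IsIndecomposableModule A M := by
  refine isIndecomposableModule_iff_isIdempotentElem.2 ⟨⟨x, 0, hx⟩, fun f hf ↦ ?_⟩
  by_cases hfx : f x = 0
  · exact .inl (hf.eq_zero_of_isNilpotent (hnil f hfx))
  · obtain ⟨g, hg⟩ := hret f hfx
    have hu : IsUnit (g * f) := by
      simpa using (hnil (1 - g * f) (by simp [hg])).isUnit_one_sub
    exact .inr (hu.mul_left_cancel (by rw [mul_assoc, hf.eq, mul_one]))

end Indecomposable

namespace IsEndofinite

variable {A : Type} [Ring A] {N : Type} [AddCommGroup N] [Module A N]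

theorem isNilpotent_of_forall_apply_eq (hN : IsEndofinite A N) {ε : Module.End A N}
    (hε : ∀ (ε' : Module.End A N) (s : N), ε' (ε s) = s → s = 0) : IsNilpotent ε := by
  obtain ⟨_, _⟩ := isFiniteLength_iff_isNoetherian_isArtinian.1 hN
  let C (s : N) : Submodule (Module.End A N) N := Submodule.span _ {s}
  have hlt (s : N) (hs : s ≠ 0) : C (ε s) < C s := by
    refine lt_of_le_not_ge ((Submodule.span_singleton_le_iff_mem ..).2
      (Submodule.mem_span_singleton.2 ⟨ε, rfl⟩)) fun h ↦ hs ?_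
    obtain ⟨ε', hε'⟩ := Submodule.mem_span_singleton.1 (h (Submodule.mem_span_singleton_self s))
    exact hε ε' s hε'
  have hheight (k : ℕ) : ∀ s, (ε ^ k) s ≠ 0 → (k : ℕ∞) ≤ Order.height (C s) := by
    induction k with
    | zero => simp
    | succ k ih =>
      intro s hs
      rw [pow_succ, Module.End.mul_apply] at hs
      have hs₀ : s ≠ 0 := by
        rintro rfl
        simp at hs
      exact Order.add_one_le_of_lt
        ((ih _ hs).trans_lt (Submodule.height_strictMono (hlt s hs₀)))
  obtain ⟨n, hn⟩ := ENat.ne_top_iff_exists.1 (Module.length_ne_top (R := Module.End A N) (M := N))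
  refine ⟨n + 1, LinearMap.ext fun s ↦ by_contra fun hs ↦ ?_⟩
  have h := (hheight (n + 1) s hs).trans (Order.height_mono le_top)
  rw [← Module.length_eq_height, ← hn] at h
  exact absurd (Nat.cast_le.1 h) (by omega)

end IsEndofinite

/-- Zorn's lemma for the `S ≤ A × N` on which `(a, n) ↦ a • x` satisfies the positive primitive
conditions of `(a, n) ↦ a • x + n`: for `S = A × K` these are the `K` killed by a map fixing `x`. -/
theorem PPDCC.exists_maximal_ker {A : Type} [Ring A] {N : Type} [AddCommGroup N] [Module A N]
    (hN : PPDCC (A := A) A N) (x : N) : ∃ e : Module.End A N, e x = x ∧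
      ∀ e' : Module.End A N, e' x = x → LinearMap.ker e ≤ LinearMap.ker e' →
        LinearMap.ker e' ≤ LinearMap.ker e := by
  let q : A × N →ₗ[A] N := LinearMap.toSpanSingleton A N x ∘ₗ LinearMap.fst A A N
  let p : A × N →ₗ[A] N := q + LinearMap.snd A A N
  let P (S : Submodule A (A × N)) : Prop := PPTypeLE (p ∘ₗ S.subtype) (q ∘ₗ S.subtype)
  have hP (e : Module.End A N) (he : e x = x) : P (Submodule.prod ⊤ (LinearMap.ker e)) := by
    have h : q ∘ₗ (Submodule.prod ⊤ (LinearMap.ker e)).subtype = e ∘ₗ p ∘ₗ Submodule.subtype _ := by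
      ext ⟨⟨a, n⟩, -, hn : e n = 0⟩
      simp [p, q, he, hn]
    change PPTypeLE _ (q ∘ₗ _)
    rw [h]
    exact .of_comp _ e
  obtain ⟨S, hle, hS, hmax⟩ : ∃ S, Submodule.prod ⊤ (LinearMap.ker (1 : Module.End A N)) ≤ S ∧
      Maximal P S :=
    zorn_le_nonempty₀ {S | P S} (fun c hcP hc S hS ↦
      ⟨sSup c, .restrict_sSup hc.directedOn ⟨S, hS⟩ hcP, fun _ ↦ le_sSup⟩) _ (hP 1 rfl)
  obtain ⟨e, he⟩ := hS.exists_comp_eq hN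
  have hex : e x = x := by
    have h1 : ((1, 0) : A × N) ∈ S := hle ⟨trivial, rfl⟩
    simpa [p, q] using LinearMap.congr_fun he ⟨_, h1⟩
  have hker {s : A × N} (hs : s ∈ S) : e s.2 = 0 := by
    simpa [p, q, hex] using LinearMap.congr_fun he ⟨s, hs⟩
  refine ⟨e, hex, fun e' he' hle' n hn ↦ ?_⟩
  have hmem : ((0, n) : A × N) ∈ S :=
    hmax (hP e' he') (fun s hs ↦ ⟨trivial, hle' (hker hs)⟩) ⟨trivial, hn⟩
  exact hker hmem

namespace IsEndofinite

variable {A : Type} [Ring A] {N : Type} [AddCommGroup N] [Module A N]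

theorem isNilpotent_of_ker_le (hN : IsEndofinite A N) {x : N} {e ε : Module.End A N}
    (he : e x = x) (hmax : ∀ e' : Module.End A N, e' x = x →
      LinearMap.ker e ≤ LinearMap.ker e' → LinearMap.ker e' ≤ LinearMap.ker e)
    (hεx : ε x = 0) (hle : LinearMap.ker e ≤ LinearMap.ker ε) : IsNilpotent ε := by
  refine hN.isNilpotent_of_forall_apply_eq fun ε' s hs ↦ ?_
  have hes : e s = 0 := by
    refine hmax (e - e * ε' * ε) (by simp [he, hεx]) (fun u (hu : e u = 0) ↦ ?_) (by simp [hs])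
    have hεu : ε u = 0 := hle hu
    simp [hu, hεu]
  have hεs : ε s = 0 := hle hes
  rw [← hs, hεs, map_zero]

/-- The range of `p` is a hull of `x`. -/
theorem exists_isIdempotentElem_apply_eq (hN : IsEndofinite A N) (x : N) :
    ∃ p : Module.End A N, IsIdempotentElem p ∧ p x = x ∧
      ∀ ε : Module.End A N, ε * p = ε → ε x = 0 → IsNilpotent ε := by
  obtain ⟨e, hex, hmax⟩ := hN.ppDCC.exists_maximal_ker x
  obtain ⟨n, hn⟩ : IsNilpotent (e - e ^ 2) := by
    refine hN.isNilpotent_of_ker_le hex hmax (by simp [pow_two, hex]) fun u (hu : e u = 0) ↦ ?_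
    simp [pow_two, hu]
  let a := e ^ (n + 1)
  have hax : a x = x := by
    rw [Module.End.pow_apply, Function.iterate_fixed hex]
  refine ⟨1 - (1 - a) ^ (n + 1),
    isIdempotentElem_one_sub_one_sub_pow_pow e (n + 1) (by rw [pow_succ, hn, zero_mul]), ?_,
    fun ε hε hεx ↦ hN.isNilpotent_of_ker_le hex hmax hεx fun u (hu : e u = 0) ↦ ?_⟩
  · simp [pow_succ, hax]
  · have hau : a u = 0 := by simp [a, pow_succ, hu]
    have hu' : ((1 - a) ^ (n + 1)) u = u := by
      rw [Module.End.pow_apply, Function.iterate_fixed (by simp [hau])]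
    rw [LinearMap.mem_ker, ← hε, Module.End.mul_apply]
    simp [hu']

theorem isNilpotent_of_apply_eq_zero (hN : IsEndofinite A N) (hI : IsIndecomposableModule A N)
    {x : N} (hx : x ≠ 0) {f : Module.End A N} (hf : f x = 0) : IsNilpotent f := by
  obtain ⟨p, hp, hpx, hnil⟩ := hN.exists_isIdempotentElem_apply_eq x
  rcases (isIndecomposableModule_iff_isIdempotentElem.1 hI).2 p hp with rfl | rfl
  · exact absurd hpx.symm hx
  · exact hnil f (mul_one f) hf

theorem bijective_of_apply_eq (hN : IsEndofinite A N) (hI : IsIndecomposableModule A N)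
    {x : N} (hx : x ≠ 0) {f : Module.End A N} (hf : f x = x) : Function.Bijective f := by
  have h := (hN.isNilpotent_of_apply_eq_zero hI hx (f := 1 - f) (by simp [hf])).isUnit_one_sub
  rw [sub_sub_cancel] at h
  exact (Module.End.isUnit_iff f).1 h

theorem exists_indecomposable_retract (hN : IsEndofinite A N) [Nontrivial N] :
    ∃ (M : Submodule A N) (π : N →ₗ[A] M), π ∘ₗ M.subtype = .id ∧ IsIndecomposableModule A M := by
  obtain ⟨_, _⟩ := isFiniteLength_iff_isNoetherian_isArtinian.1 hN
  obtain ⟨a, ha⟩ := IsAtomic.exists_atom (Submodule (Module.End A N) N)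
  obtain ⟨x, hxa, hx⟩ := Submodule.exists_mem_ne_zero_of_ne_bot ha.1
  have hret (y : N) (hy : y ∈ a) (hy₀ : y ≠ 0) : ∃ ε : Module.End A N, ε y = x := by
    have h := (ha.le_iff.1 ((Submodule.span_singleton_le_iff_mem y a).2 hy)).resolve_left
      (mt Submodule.span_singleton_eq_bot.1 hy₀)
    exact Submodule.mem_span_singleton.1 (h ▸ hxa)
  obtain ⟨p, hp, hpx, hnil⟩ := hN.exists_isIdempotentElem_apply_eq x
  let M := LinearMap.range p
  let π : N →ₗ[A] M := p.rangeRestrict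
  let x' : M := ⟨x, x, hpx⟩
  have hπx : π x = x' := Subtype.ext hpx
  have hπ : π ∘ₗ M.subtype = .id := by
    ext ⟨_, n, rfl⟩
    exact LinearMap.congr_fun hp n
  have hπp : π ∘ₗ p = π := LinearMap.ext fun n ↦ Subtype.ext (LinearMap.congr_fun hp n)
  refine ⟨M, π, hπ, isIndecomposableModule_of_isNilpotent (x := x')
    (fun h ↦ hx (congrArg Subtype.val h)) (fun f hf ↦ ?_) fun f hf ↦ ?_⟩
  · obtain ⟨n, hn⟩ := hnil (M.subtype ∘ₗ f ∘ₗ π)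
      (congrArg (fun u ↦ M.subtype ∘ₗ f ∘ₗ u) hπp) (by simp [hπx, hf])
    refine ⟨n, LinearMap.ext fun m ↦ M.subtype_injective ?_⟩
    have h := Module.End.commute_pow_left_of_commute (f := M.subtype) (g := f)
      (g₂ := M.subtype ∘ₗ f ∘ₗ π) (by rw [LinearMap.comp_assoc, LinearMap.comp_assoc, hπ]; rfl) n
    rw [hn] at h
    exact (LinearMap.congr_fun h m).symm
  · obtain ⟨ε, hε⟩ := hret (f x') (by
      simpa [hπx] using a.smul_mem (M.subtype ∘ₗ f ∘ₗ π) hxa) fun h ↦ hf (Subtype.ext h)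
    exact ⟨π ∘ₗ ε ∘ₗ M.subtype, by simp [hε, hπx]⟩

end IsEndofinite

theorem coheight_le_of_strictMono_nat {α : Type*} [Preorder α] {r : α → ℕ} (hr : StrictMono r)
    {n : ℕ} (hn : ∀ a, r a ≤ n) (a : α) : Order.coheight a ≤ (n - r a : ℕ) :=
  Order.coheight_le fun p hp ↦ by
    have h := (p.map r hr).head_add_length_le_nat
    rw [LTSeries.head_map, LTSeries.last_map, hp] at h
    have hlast := hn p.last
    exact Nat.cast_le.2 (show p.length ≤ n - r a by change r a + p.length ≤ _ at h; omega)

theorem IsSubadditive.map_pushout_comp {A : Type} [Ring A] {χ : ModuleFunction A}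
    (hχ : IsSubadditive A χ) {X Y Z : Type} [AddCommGroup X] [Module A X] [AddCommGroup Y]
    [Module A Y] [AddCommGroup Z] [Module A Z] [Module.FinitePresentation A X]
    [Module.FinitePresentation A Y] [Module.FinitePresentation A Z] (f : X →ₗ[A] Y)
    (g : Y →ₗ[A] Z) :
    χ (LinearPushout f (g ∘ₗ f)) = χ (Y ⧸ LinearMap.range f) + χ Z := by
  rw [← hχ.map_prod]
  refine hχ.map_coker_of_exact (f := f.prod (-(g ∘ₗ f)))
    (g := ((LinearMap.range f).mkQ ∘ₗ LinearMap.fst A Y Z).prod (g.coprod .id)) ?_ ?_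
  · rintro ⟨y, z⟩
    suffices (∃ x, f x = y) ∧ g y + z = 0 ↔ ∃ x, f x = y ∧ -g (f x) = z by
      simpa [Prod.ext_iff] using this
    constructor
    · rintro ⟨⟨x, rfl⟩, h⟩
      exact ⟨x, rfl, neg_eq_of_add_eq_zero_right h⟩
    · rintro ⟨x, rfl, rfl⟩
      exact ⟨⟨x, rfl⟩, add_neg_cancel _⟩
  · rintro ⟨q, z⟩
    obtain ⟨y, rfl⟩ := Submodule.mkQ_surjective _ q
    exact ⟨(y, z - g y), by simp⟩

namespace PPFormula

variable {A : Type} [Ring A] {χ : ModuleFunction A} {X M : Type} [AddCommGroup X] [Module A X]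
  [AddCommGroup M] [Module A M] [Module.FinitePresentation A X]

/-- The rank of a positive primitive formula with respect to `χ`. For subadditive `χ` the
subtraction does not truncate, by `IsSubadditive.coker_le`. -/
def rank {X : Type} [AddCommGroup X] [Module A X] (χ : ModuleFunction A) (φ : PPFormula A X) : ℕ :=
  χ φ.target - χ (φ.target ⧸ LinearMap.range φ.map)

theorem rank_le (hχ : IsSubadditive A χ) (φ : PPFormula A X) : φ.rank χ ≤ χ X :=
  Nat.sub_le_iff_le_add.2 (hχ.le_add_coker φ.map)

variable {Z : Type} [AddCommGroup Z] [Module A Z] [Module.FinitePresentation A Z]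

theorem rank_comp_le (hχ : IsSubadditive A χ) (φ : PPFormula A X) (g : φ.target →ₗ[A] Z) :
    (PPFormula.mk (g ∘ₗ φ.map)).rank χ ≤ φ.rank χ := by
  have h₁ := hχ.le_add_coker (LinearPushout.inl φ.map (g ∘ₗ φ.map))
  rw [hχ.map_coker_of_exact (LinearPushout.exact_inl_toCoker φ.map (g ∘ₗ φ.map))
    (LinearPushout.toCoker_surjective φ.map (g ∘ₗ φ.map)), hχ.map_pushout_comp] at h₁
  unfold rank
  dsimp only
  omega

theorem isChiMono_of_rank_comp_eq (hχ : IsSubadditive A χ) {φ : PPFormula A X}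
    {g : φ.target →ₗ[A] Z} (h : (PPFormula.mk (g ∘ₗ φ.map)).rank χ = φ.rank χ) :
    IsChiMono χ (LinearPushout.inl φ.map (g ∘ₗ φ.map)) := by
  rw [isChiMono_iff_of_exact hχ (LinearPushout.exact_inl_toCoker _ _)
    (LinearPushout.toCoker_surjective _ _), hχ.map_pushout_comp]
  have h₁ := hχ.coker_le φ.map
  have h₂ := hχ.coker_le (g ∘ₗ φ.map)
  unfold rank at h
  dsimp only at h
  omega

theorem rank_lt_rank_sup (hχ : IsSubadditive A χ) (hM : IsChiInjective χ M) {φ ψ : PPFormula A X}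
    (h : ¬ ψ.realize M ≤ φ.realize M) : φ.rank χ < (φ.sup ψ).rank χ := by
  let g : (φ.sup ψ).target →ₗ[A] φ.target := LinearMap.fst A φ.target ψ.target
  refine (rank_comp_le hχ (φ.sup ψ) g).lt_of_ne fun heq ↦ h ?_
  have hle := realize_le_iff.2 (hM _ _ _ (isChiMono_of_rank_comp_eq (g := g) hχ heq))
  rw [realize_sup] at hle
  exact le_sup_right.trans hle

end PPFormula

/-- The rank of a subgroup of `X → M` with respect to `χ`: the largest rank of a positive primitive
formula with all its solutions in this subgroup. -/
noncomputable def subgroupRank {A : Type} [Ring A] (χ : ModuleFunction A) {X M : Type}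
    [AddCommGroup X] [Module A X] [AddCommGroup M] [Module A M]
    (H : Submodule (Module.End A M) (X →ₗ[A] M)) : ℕ :=
  sSup {n | ∃ φ : PPFormula A X, φ.realize M ≤ H ∧ φ.rank χ = n}

namespace IsSubadditive

variable {A : Type} [Ring A] {χ : ModuleFunction A} {X M : Type} [AddCommGroup X] [Module A X]
  [AddCommGroup M] [Module A M] [Module.FinitePresentation A X]
  {H : Submodule (Module.End A M) (X →ₗ[A] M)}

theorem bddAbove_rank (hχ : IsSubadditive A χ) (H : Submodule (Module.End A M) (X →ₗ[A] M)) :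
    BddAbove {n | ∃ φ : PPFormula A X, φ.realize M ≤ H ∧ φ.rank χ = n} :=
  ⟨χ X, fun _ ⟨φ, _, hφ⟩ ↦ hφ ▸ φ.rank_le hχ⟩

theorem rank_le_subgroupRank (hχ : IsSubadditive A χ) {φ : PPFormula A X} (h : φ.realize M ≤ H) :
    φ.rank χ ≤ subgroupRank χ H :=
  le_csSup (hχ.bddAbove_rank H) ⟨φ, h, rfl⟩

theorem exists_rank_eq_subgroupRank (hχ : IsSubadditive A χ)
    (H : Submodule (Module.End A M) (X →ₗ[A] M)) :
    ∃ φ : PPFormula A X, φ.realize M ≤ H ∧ φ.rank χ = subgroupRank χ H := by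
  have h₀ : (PPFormula.mk (0 : X →ₗ[A] PUnit)).realize M ≤ H := by
    rintro _ ⟨y, rfl⟩
    simp [LinearMap.lcomp_apply']
  exact Nat.sSup_mem (s := {n | ∃ φ : PPFormula A X, φ.realize M ≤ H ∧ φ.rank χ = n})
    ⟨_, _, h₀, rfl⟩ (hχ.bddAbove_rank H)

theorem subgroupRank_le (hχ : IsSubadditive A χ) (H : Submodule (Module.End A M) (X →ₗ[A] M)) :
    subgroupRank χ H ≤ χ X := by
  obtain ⟨φ, -, hφ⟩ := hχ.exists_rank_eq_subgroupRank H
  exact hφ ▸ φ.rank_le hχ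

end IsSubadditive

namespace IsChiInjective

variable {A : Type} [Ring A] {χ : ModuleFunction A} {X Y Z M : Type} [AddCommGroup X] [Module A X]
  [AddCommGroup Y] [Module A Y] [AddCommGroup Z] [Module A Z] [AddCommGroup M] [Module A M]
  [Module.FinitePresentation A X] [Module.FinitePresentation A Y] [Module.FinitePresentation A Z]

theorem subgroupRank_lt (hM : IsChiInjective χ M) (hχ : IsSubadditive A χ)
    {H K : Submodule (Module.End A M) (X →ₗ[A] M)} (hHK : H ≤ K) {ψ : PPFormula A X}
    (hψK : ψ.realize M ≤ K) (hψH : ¬ ψ.realize M ≤ H) : subgroupRank χ H < subgroupRank χ K := by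
  obtain ⟨φ, hφH, hφ⟩ := hχ.exists_rank_eq_subgroupRank H
  rw [← hφ]
  refine (PPFormula.rank_lt_rank_sup hχ hM fun h ↦ hψH (h.trans hφH)).trans_le
    (hχ.rank_le_subgroupRank ?_)
  rw [PPFormula.realize_sup]
  exact sup_le (hφH.trans hHK) hψK

theorem ppDCC (hM : IsChiInjective χ M) (hχ : IsSubadditive A χ) : PPDCC (A := A) X M :=
  Subrelation.wf (fun h ↦ hM.subgroupRank_lt hχ h.le le_rfl h.not_ge)
    (measure fun φ : PPFormula A X ↦ subgroupRank χ (φ.realize M)).wf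

theorem exists_realize_eq_span_singleton (hM : IsChiInjective χ M) (hχ : IsSubadditive A χ)
    (x : X →ₗ[A] M) :
    ∃ φ : PPFormula A X, φ.realize M = Submodule.span (Module.End A M) {x} := by
  obtain ⟨φ, hxφ : x ∈ φ.realize M, hmin⟩ :=
    (hM.ppDCC hχ).has_min {φ : PPFormula A X | x ∈ φ.realize M} ⟨⟨LinearMap.id⟩, x, rfl⟩
  refine ⟨φ, le_antisymm (fun y hy ↦ ?_) ((Submodule.span_singleton_le_iff_mem ..).2 hxφ)⟩
  have htype : PPTypeLE x y := .of_forall_mem_realize fun ψ hxψ ↦ by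
    have hinf : (φ.inf ψ).realize M = φ.realize M ⊓ ψ.realize M := PPFormula.realize_inf φ ψ
    have hx : x ∈ (φ.inf ψ).realize M := hinf ▸ ⟨hxφ, hxψ⟩
    have hle : φ.realize M ≤ φ.realize M ⊓ ψ.realize M :=
      of_not_not fun h ↦ hmin (φ.inf ψ) hx (hinf ▸ lt_of_le_not_ge inf_le_left h)
    exact (hle hy).2
  exact Submodule.mem_span_singleton.2 (htype.exists_comp_eq (hM.ppDCC hχ))

theorem subgroupRank_strictMono (hM : IsChiInjective χ M) (hχ : IsSubadditive A χ) :
    StrictMono (subgroupRank χ : Submodule (Module.End A M) (X →ₗ[A] M) → ℕ) := by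
  intro H K hHK
  obtain ⟨x, hxK, hxH⟩ := SetLike.exists_of_lt hHK
  obtain ⟨ψ, hψ⟩ := hM.exists_realize_eq_span_singleton hχ x
  refine hM.subgroupRank_lt hχ hHK.le (ψ := ψ) ?_ ?_
  · rwa [hψ, Submodule.span_singleton_le_iff_mem]
  · rwa [hψ, Submodule.span_singleton_le_iff_mem]

theorem length_quotient_realize_le (hM : IsChiInjective χ M) (hχ : IsSubadditive A χ)
    (φ : PPFormula A X) :
    Module.length (Module.End A M) ((X →ₗ[A] M) ⧸ φ.realize M) ≤ (χ X - φ.rank χ : ℕ) := by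
  rw [Module.length_quotient]
  refine (coheight_le_of_strictMono_nat (hM.subgroupRank_strictMono hχ) hχ.subgroupRank_le
    _).trans ?_
  exact_mod_cast Nat.sub_le_sub_left (hχ.rank_le_subgroupRank le_rfl) _

theorem length_hom_le (hM : IsChiInjective χ M) (hχ : IsSubadditive A χ) :
    Module.length (Module.End A M) (X →ₗ[A] M) ≤ χ X := by
  rw [Module.length_eq_coheight]
  exact (coheight_le_of_strictMono_nat (hM.subgroupRank_strictMono hχ) hχ.subgroupRank_le
    _).trans (Nat.cast_le.2 (Nat.sub_le _ _))

theorem isEndofinite {M : Type} [AddCommGroup M] [Module A M] (hM : IsChiInjective χ M)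
    (hχ : IsSubadditive A χ) : IsEndofinite A M := by
  have h := hM.length_hom_le hχ (X := A)
  rw [(LinearMap.ringLmapEquivSelf A (Module.End A M) M).length_eq] at h
  exact Module.length_ne_top_iff.1 (ne_top_of_le_ne_top (ENat.natCast_ne_top _) h)

theorem chiMod_le (hM : IsChiInjective χ M) (hχ : IsSubadditive A χ) : chiMod A M X ≤ χ X := by
  have h := hM.length_hom_le hχ (X := X)
  rwa [← (hM.isEndofinite hχ).coe_chiMod, Nat.cast_le] at h

theorem chiMod_add_le (hM : IsChiInjective χ M) (hχ : IsSubadditive A χ) {f : X →ₗ[A] Y}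
    {g : Y →ₗ[A] Z} (hfg : Function.Exact f g) (hg : Function.Surjective g) :
    chiMod A M X + chiMod A M Z + χ Y ≤ chiMod A M Y + χ X + χ Z := by
  have hE := hM.isEndofinite hχ
  let R := LinearMap.range (f.lcomp (Module.End A M) M)
  have hX : (chiMod A M X : ℕ∞) = Module.length (Module.End A M) R +
      Module.length (Module.End A M) ((X →ₗ[A] M) ⧸ R) := by
    rw [hE.coe_chiMod]
    exact Module.length_eq_add_of_exact R.subtype R.mkQ R.subtype_injective R.mkQ_surjective
      (LinearMap.exact_subtype_mkQ R)
  have hQ := hM.length_quotient_realize_le hχ (PPFormula.mk f)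
  change Module.length (Module.End A M) ((X →ₗ[A] M) ⧸ R) ≤ _ at hQ
  have h : chiMod A M X + chiMod A M Z ≤
      chiMod A M Y + (χ X - (χ Y - χ (Y ⧸ LinearMap.range f))) := by
    rw [← Nat.cast_le (α := ℕ∞), Nat.cast_add, Nat.cast_add, hX, hE.chiMod_eq_of_exact hfg hg,
      add_right_comm, add_comm (Module.length (Module.End A M) R)]
    gcongr
    exact hQ
  rw [hχ.map_coker_of_exact hfg hg] at h
  have h₁ := hχ.le_add_of_exact hfg hg
  have h₂ := hχ.le_of_surjective hg
  omega

end IsChiInjective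

section ComparePPTypes

variable {A : Type} [Ring A] {X M N : Type} [AddCommGroup X] [Module A X] [AddCommGroup M]
  [Module A M] [AddCommGroup N] [Module A N]

theorem PPDCC.exists_minimal_realize_ne_bot [Module.FinitePresentation A X] [Nontrivial (X →ₗ[A] N)]
    (hM : PPDCC (A := A) X M) : ∃ φ : PPFormula A X, φ.realize N ≠ ⊥ ∧
      ∀ θ : PPFormula A X, φ.realize N ⊓ θ.realize N ≠ ⊥ → φ.realize M ≤ θ.realize M := by
  let U : Set (PPFormula A X) := {φ | φ.realize N ≠ ⊥}
  have hU : U.Nonempty := by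
    obtain ⟨x, hx⟩ := exists_ne (0 : X →ₗ[A] N)
    exact ⟨⟨.id⟩, (Submodule.ne_bot_iff _).2 ⟨x, ⟨x, x.comp_id⟩, hx⟩⟩
  obtain ⟨φ, hφ, hmin⟩ := hM.has_min U hU
  refine ⟨φ, hφ, fun θ hθ ↦ ?_⟩
  have hlt := hmin (φ.inf θ) (by rwa [← PPFormula.realize_inf] at hθ)
  rw [PPFormula.realize_inf] at hlt
  exact inf_eq_left.1 (inf_le_left.eq_of_not_lt hlt)

theorem PPFormula.exists_maximal_realize_eq_bot [IsNoetherian (Module.End A M) (X →ₗ[A] M)] :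
    ∃ ψ : PPFormula A X, ψ.realize N = ⊥ ∧
      ∀ θ : PPFormula A X, θ.realize N = ⊥ → θ.realize M ≤ ψ.realize M := by
  have hwf : WellFounded fun φ ψ : PPFormula A X ↦ ψ.realize M < φ.realize M :=
    InvImage.wf (fun φ : PPFormula A X ↦ φ.realize M) wellFounded_gt
  obtain ⟨ψ, hψ, hmax⟩ := hwf.has_min {ψ | ψ.realize N = ⊥} ⟨⟨(0 : X →ₗ[A] PUnit)⟩, by
    refine (Submodule.eq_bot_iff _).2 ?_
    rintro _ ⟨y, rfl⟩
    exact LinearMap.comp_zero _⟩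
  refine ⟨ψ, hψ, fun θ hθ ↦ ?_⟩
  have hlt := hmax (ψ.sup θ) (by
    change (ψ.sup θ).realize N = ⊥
    rw [PPFormula.realize_sup, hψ, hθ, sup_bot_eq])
  rw [PPFormula.realize_sup] at hlt
  exact sup_eq_left.1 (le_sup_left.eq_of_not_lt hlt).symm

/-- Separate `M` by a formula `φ` minimal with `φ(N) ≠ 0` and a formula `ψ` maximal with
`ψ(N) = 0`: elements of `φ(M) \ ψ(M)` and of `φ(N) \ 0` satisfy the same formulas. -/
theorem exists_ne_zero_ppTypeLE [Module.FinitePresentation A X] [Nontrivial (X →ₗ[A] N)]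
    [IsNoetherian (Module.End A M) (X →ₗ[A] M)] (hM : PPDCC (A := A) X M)
    (hMN : ∀ φ ψ : PPFormula A X, φ.realize M ≤ ψ.realize M → φ.realize N ≤ ψ.realize N) :
    ∃ (p : X →ₗ[A] M) (q : X →ₗ[A] N), q ≠ 0 ∧ PPTypeLE p q ∧ PPTypeLE q p := by
  obtain ⟨φ, hφ, hmin⟩ := hM.exists_minimal_realize_ne_bot (N := N)
  obtain ⟨ψ, hψ, hmax⟩ := PPFormula.exists_maximal_realize_eq_bot (A := A) (X := X) (M := M)
    (N := N)
  have hφψ : ¬ φ.realize M ≤ ψ.realize M := fun h ↦ hφ (le_bot_iff.1 (hψ ▸ hMN φ ψ h))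
  obtain ⟨p, hpφ, hpψ⟩ := SetLike.not_le_iff_exists.1 hφψ
  obtain ⟨q, hqφ, hq⟩ := (Submodule.ne_bot_iff _).1 hφ
  refine ⟨p, q, hq, .of_forall_mem_realize fun θ hpθ ↦ ?_, .of_forall_mem_realize fun θ hqθ ↦ ?_⟩
  · have hθ : φ.realize N ⊓ θ.realize N ≠ ⊥ := fun h ↦ by
      rw [← PPFormula.realize_inf] at h
      have hle := hmax _ h
      rw [PPFormula.realize_inf] at hle
      exact hpψ (hle ⟨hpφ, hpθ⟩)
    exact hMN φ θ (hmin θ hθ) hqφ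
  · exact hmin θ ((Submodule.ne_bot_iff _).2 ⟨q, ⟨hqφ, hqθ⟩, hq⟩) hpφ

theorem IsEndofinite.nonempty_linearEquiv_of_ppTypeLE (hM : IsEndofinite A M)
    (hMi : IsIndecomposableModule A M) (hN : IsEndofinite A N) (hNi : IsIndecomposableModule A N)
    {p : A →ₗ[A] M} {q : A →ₗ[A] N} (hq : q ≠ 0) (hpq : PPTypeLE p q) (hqp : PPTypeLE q p) :
    Nonempty (M ≃ₗ[A] N) := by
  obtain ⟨e, rfl⟩ := hpq.exists_comp_eq hN.ppDCC
  obtain ⟨e', he'⟩ := hqp.exists_comp_eq hM.ppDCC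
  have hq1 : e (p 1) ≠ 0 := fun h ↦ hq (LinearMap.ext_ring h)
  have hp1 : e' (e (p 1)) = p 1 := LinearMap.congr_fun he' 1
  have hM' : Function.Bijective (e' ∘ₗ e) :=
    hM.bijective_of_apply_eq hMi (x := p 1) (fun h ↦ hq1 (by rw [h, map_zero])) hp1
  have hN' : Function.Bijective (e ∘ₗ e') :=
    hN.bijective_of_apply_eq hNi hq1 (congrArg e hp1)
  exact ⟨.ofBijective e ⟨.of_comp hM'.injective, .of_comp hN'.surjective⟩⟩

theorem IsEndofinite.nonempty_linearEquiv_of_isChiInjective (hM : IsEndofinite A M)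
    (hMi : IsIndecomposableModule A M) (hN : IsEndofinite A N) (hNi : IsIndecomposableModule A N)
    (h : IsChiInjective (chiMod A M) N) : Nonempty (M ≃ₗ[A] N) := by
  have hMN (φ ψ : PPFormula A A) (hle : φ.realize M ≤ ψ.realize M) :
      φ.realize N ≤ ψ.realize N :=
    PPFormula.realize_le_iff.2
      (h _ _ _ (hM.isChiMono_chiMod_iff.2 (PPFormula.realize_le_iff.1 hle)))
  have : Nontrivial N := hNi.1
  have : Nontrivial (A →ₗ[A] N) := (LinearMap.ringLmapEquivSelf A ℕ N).toEquiv.nontrivial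
  obtain ⟨_, _⟩ := isFiniteLength_iff_isNoetherian_isArtinian.1 (hM.isFiniteLength_hom A)
  obtain ⟨p, q, hq, hpq, hqp⟩ := exists_ne_zero_ppTypeLE (X := A) .of_isArtinian hMN
  exact hM.nonempty_linearEquiv_of_ppTypeLE hMi hN hNi hq hpq hqp

end ComparePPTypes

section Correspondence

variable {A : Type} [Ring A] {χ χ₁ χ₂ : ModuleFunction A} {X Y M N : Type} [AddCommGroup X]
  [Module A X] [AddCommGroup Y] [Module A Y] [AddCommGroup M] [Module A M] [AddCommGroup N]
  [Module A N] [Module.FinitePresentation A X] [Module.FinitePresentation A Y]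

theorem IsChiInjective.of_retract (hN : IsChiInjective χ N) (i : M →ₗ[A] N) (π : N →ₗ[A] M)
    (h : π ∘ₗ i = .id) : IsChiInjective χ M := by
  intro X Y _ _ _ _ _ _ f hf x
  obtain ⟨y, hy⟩ := hN X Y f hf (i ∘ₗ x)
  exact ⟨π ∘ₗ y, by rw [LinearMap.comp_assoc, hy, ← LinearMap.comp_assoc, h, LinearMap.id_comp]⟩

theorem IsSubadditive.exists_indecomposable_isChiInjective (hχ : IsSubadditive A χ)
    (h₀ : FpNonzero A χ) :
    ∃ (M : Type) (_ : AddCommGroup M) (_ : Module A M),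
      IsEndofinite A M ∧ IsIndecomposableModule A M ∧ IsChiInjective χ M := by
  obtain ⟨X₀, _, _, _, hX₀⟩ := h₀
  obtain ⟨N, _, _, _, hN⟩ := exists_isChiInjective hχ hX₀
  obtain ⟨M, π, hπ, hMi⟩ := (hN.isEndofinite hχ).exists_indecomposable_retract
  have hM : IsChiInjective χ M := hN.of_retract M.subtype π hπ
  exact ⟨M, _, _, hM.isEndofinite hχ, hMi, hM⟩

theorem FpEq.isChiMono_iff (h : FpEq A χ₁ χ₂) {f : X →ₗ[A] Y} :
    IsChiMono χ₁ f ↔ IsChiMono χ₂ f := by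
  rw [IsChiMono, IsChiMono, h X ‹_›, h Y ‹_›, h (Y ⧸ LinearMap.range f) inferInstance]

theorem IsChiMono.of_add_left (hχ₁ : IsSubadditive A χ₁) (hχ₂ : IsSubadditive A χ₂)
    {f : X →ₗ[A] Y} (hf : IsChiMono (fun X _ _ ↦ χ₁ X + χ₂ X : ModuleFunction A) f) :
    IsChiMono χ₁ f := by
  have h₁ := hχ₁.le_add_coker f
  have h₂ := hχ₂.le_add_coker f
  unfold IsChiMono at hf ⊢
  dsimp only at hf
  omega

/-- An indecomposable `χ₁`-injective module is `χ_M`-injective, hence isomorphic to `M`. -/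
theorem IsEndofinite.chiMod_le_of_fpEq_add (hM : IsEndofinite A M)
    (hMi : IsIndecomposableModule A M) (hχ₁ : IsSubadditive A χ₁) (hχ₂ : IsSubadditive A χ₂)
    (h₀ : FpNonzero A χ₁) (h : FpEq A (chiMod A M) fun X _ _ ↦ χ₁ X + χ₂ X) :
    chiMod A M X ≤ χ₁ X := by
  obtain ⟨N, _, _, hN, hNi, hNinj⟩ := hχ₁.exists_indecomposable_isChiInjective h₀
  have hNM : IsChiInjective (chiMod A M) N := fun X Y _ _ _ _ _ _ f hf ↦
    hNinj X Y f (.of_add_left hχ₁ hχ₂ (h.isChiMono_iff.1 hf))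
  obtain ⟨e⟩ := hM.nonempty_linearEquiv_of_isChiInjective hMi hN hNi hNM
  exact (hNinj.of_retract e.toLinearMap e.symm.toLinearMap e.symm_comp).chiMod_le hχ₁

theorem IsEndofinite.isIrreducibleSubadditive_chiMod (hM : IsEndofinite A M)
    (hMi : IsIndecomposableModule A M) : IsIrreducibleSubadditive A (chiMod A M) := by
  have : Nontrivial M := hMi.1
  refine ⟨hM.isSubadditive_chiMod, ⟨A, _, _, inferInstance, hM.chiMod_self_ne_zero⟩, ?_⟩
  rintro ⟨χ₁, χ₂, hχ₁, hχ₂, h₁, h₂, h⟩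
  have h' : FpEq A (chiMod A M) fun X _ _ ↦ χ₂ X + χ₁ X :=
    fun X _ _ hX ↦ (h X hX).trans (add_comm _ _)
  have hle₁ : chiMod A M A ≤ χ₁ A := hM.chiMod_le_of_fpEq_add hMi hχ₁ hχ₂ h₁ h
  have hle₂ : chiMod A M A ≤ χ₂ A := hM.chiMod_le_of_fpEq_add hMi hχ₂ hχ₁ h₂ h'
  have hne : chiMod A M A ≠ 0 := hM.chiMod_self_ne_zero
  have hadd : chiMod A M A = χ₁ A + χ₂ A := h A inferInstance
  omega

theorem IsChiInjective.isSubadditive_sub_chiMod (hM : IsChiInjective χ M)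
    (hχ : IsSubadditive A χ) : IsSubadditive A fun X _ _ ↦ χ X - chiMod A M X := by
  have hχM := (hM.isEndofinite hχ).isSubadditive_chiMod
  refine ⟨fun X Y _ _ _ _ _ _ e ↦ ?_, fun X Y _ _ _ _ _ _ ↦ ?_,
    fun X Y Z _ _ _ _ _ _ _ _ _ f g hfg hg ↦ ?_⟩ <;> dsimp only
  · rw [hχ.map_equiv e, hχM.map_equiv e]
  · rw [hχ.map_prod, hχM.map_prod, tsub_add_tsub_comm (hM.chiMod_le hχ) (hM.chiMod_le hχ)]
  · have h := hM.chiMod_add_le hχ hfg hg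
    have hX : chiMod A M X ≤ χ X := hM.chiMod_le hχ
    have hZ : chiMod A M Z ≤ χ Z := hM.chiMod_le hχ
    omega

theorem IsIrreducibleSubadditive.exists_fpEq_chiMod (hχ : IsIrreducibleSubadditive A χ) :
    ∃ (M : Type) (_ : AddCommGroup M) (_ : Module A M),
      IsEndofinite A M ∧ IsIndecomposableModule A M ∧ FpEq A χ (chiMod A M) := by
  obtain ⟨hsub, h₀, hirr⟩ := hχ
  obtain ⟨M, _, _, hM, hMi, hMinj⟩ := hsub.exists_indecomposable_isChiInjective h₀
  have : Nontrivial M := hMi.1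
  refine ⟨M, _, _, hM, hMi, ?_⟩
  by_contra hne
  refine hirr ⟨chiMod A M, fun X _ _ ↦ χ X - chiMod A M X, hM.isSubadditive_chiMod,
    hMinj.isSubadditive_sub_chiMod hsub, ⟨A, _, _, inferInstance, hM.chiMod_self_ne_zero⟩, ?_,
    fun X _ _ _ ↦ (Nat.add_sub_cancel' (hMinj.chiMod_le hsub)).symm⟩
  by_contra hzero
  refine hne fun X _ _ hX ↦ (hMinj.chiMod_le hsub).antisymm' ?_
  exact Nat.sub_eq_zero_iff_le.1 (not_not.1 fun h ↦ hzero ⟨X, _, _, hX, h⟩)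

theorem IsEndofinite.nonempty_linearEquiv_of_fpEq (hM : IsEndofinite A M)
    (hMi : IsIndecomposableModule A M) (hN : IsEndofinite A N) (hNi : IsIndecomposableModule A N)
    (h : FpEq A (chiMod A M) (chiMod A N)) : Nonempty (M ≃ₗ[A] N) :=
  hM.nonempty_linearEquiv_of_isChiInjective hMi hN hNi fun _ _ _ _ _ _ _ _ _ hf ↦
    hN.isChiMono_chiMod_iff.1 (h.isChiMono_iff.1 hf)

end Correspondence

theorem statement18_general (A : Type) [Ring A] :
    (∀ (M : Type) [AddCommGroup M] [Module A M],
      IsEndofinite A M → IsIndecomposableModule A M →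
      IsIrreducibleSubadditive A (chiMod A M)) ∧
    (∀ χ : (X : Type) → [AddCommGroup X] → [Module A X] → ℕ,
      IsIrreducibleSubadditive A χ →
      ∃ (M : Type) (_ : AddCommGroup M) (_ : Module A M),
        IsEndofinite A M ∧ IsIndecomposableModule A M ∧ FpEq A χ (chiMod A M)) ∧
    (∀ (M N : Type) [AddCommGroup M] [Module A M] [AddCommGroup N] [Module A N],
      IsEndofinite A M → IsIndecomposableModule A M →
      IsEndofinite A N → IsIndecomposableModule A N →
      FpEq A (chiMod A M) (chiMod A N) → Nonempty (M ≃ₗ[A] N)) :=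
  ⟨fun _ _ _ hM hMi ↦ hM.isIrreducibleSubadditive_chiMod hMi,
    fun _ hχ ↦ hχ.exists_fpEq_chiMod,
    fun _ _ _ _ _ _ hM hMi hN hNi h ↦ hM.nonempty_linearEquiv_of_fpEq hMi hN hNi h⟩

/-- Crawley-Boevey's correspondence: `M ↦ χ_M` is a bijection between
isomorphism classes of indecomposable endofinite `A`-modules and irreducible subadditive
functions. -/
theorem statement18 (A : Type) [Ring A] (hA : FpAbelian A) :
    (∀ (M : Type) [AddCommGroup M] [Module A M],
      IsEndofinite A M → IsIndecomposableModule A M →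
      IsIrreducibleSubadditive A (chiMod A M)) ∧
    (∀ χ : (X : Type) → [AddCommGroup X] → [Module A X] → ℕ,
      IsIrreducibleSubadditive A χ →
      ∃ (M : Type) (_ : AddCommGroup M) (_ : Module A M),
        IsEndofinite A M ∧ IsIndecomposableModule A M ∧ FpEq A χ (chiMod A M)) ∧
    (∀ (M N : Type) [AddCommGroup M] [Module A M] [AddCommGroup N] [Module A N],
      IsEndofinite A M → IsIndecomposableModule A M →
      IsEndofinite A N → IsIndecomposableModule A N →
      FpEq A (chiMod A M) (chiMod A N) → Nonempty (M ≃ₗ[A] N)) :=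
  statement18_general A
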